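/- Let m ∈ {0,1} and p ∈ [1,∞], or m ≥ 2 an integer and p ∈ (1,∞], let α > 0, and set γ = max(0, m − 1/p). There are constants c, C > 0, depending only on f, D, m, p and α, such that for every ν ∈ (0,1], the time average over [T₁,T₂] satisfies c ν^{−γ} ≤ { |u(t)|_{m,p}^α }^{1/α} ≤ C ν^{−γ}. -/

import Mathlib

open MeasureTheory Set
open scoped ENNReal

/-- The `L^p` norm (on the circle, i.e. over one period `(0,1]`) of the `m`-th
derivative of a function `v : ℝ → ℝ` (identified with a function on `S¹ = ℝ/ℤ`). -/
noncomputable def sobLp (m : ℕ) (p : ℝ≥0∞) (v : ℝ → ℝ) : ℝ :=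
  (eLpNorm (iteratedDeriv m v) p (volume.restrict (Ioc (0:ℝ) 1))).toReal

/-- `u` is a smooth, space-periodic, zero-mean-value solution of the generalised
Burgers equation `u_t + f'(u) u_x - ν u_xx = 0` with strongly convex `f` and
nonzero initial condition. -/
structure IsBurgersSolution (f : ℝ → ℝ) (σ ν : ℝ) (u : ℝ → ℝ → ℝ) : Prop where
  hf : ContDiff ℝ (⊤ : ℕ∞) f
  hσ : 0 < σ
  hconv : ∀ y, σ ≤ iteratedDeriv 2 f y
  hν : 0 < ν
  hu : ContDiffOn ℝ (⊤ : ℕ∞) (Function.uncurry u) (Ici (0:ℝ) ×ˢ univ)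
  hper : ∀ t x, u t (x + 1) = u t x
  hpde : ∀ t, 0 < t → ∀ x,
    deriv (fun s => u s x) t + deriv f (u t x) * deriv (u t) x
      - ν * deriv (deriv (u t)) x = 0
  hmean : ∀ t, 0 ≤ t → ∫ x in Ioc (0:ℝ) 1, u t x = 0
  hinit : ∃ x, u 0 x ≠ 0

/-- The quantity `D = max(|u₀|₁⁻¹, |u₀|_{1,∞})`. -/
noncomputable def burgersD (u : ℝ → ℝ → ℝ) : ℝ :=
  max (sobLp 0 1 (u 0))⁻¹ (sobLp 1 ⊤ (u 0))

/-- `T₁ = D⁻² C̃⁻¹ / 4`. -/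
noncomputable def burgersT₁ (D Ct : ℝ) : ℝ := (D ^ 2)⁻¹ * Ct⁻¹ / 4

/-- `T₂ = max(3T₁/2, 2Dσ⁻¹)`. -/
noncomputable def burgersT₂ (σ D Ct : ℝ) : ℝ :=
  max (3 / 2 * burgersT₁ D Ct) (2 * D * σ⁻¹)

/-- Time average over `[T₁, T₂]`. -/
noncomputable def timeAvg (T₁ T₂ : ℝ) (A : ℝ → ℝ) : ℝ :=
  (T₂ - T₁)⁻¹ * ∫ t in T₁..T₂, A t

/-- The structure function `S_p(ℓ)`. -/
noncomputable def structFun (T₁ T₂ : ℝ) (u : ℝ → ℝ → ℝ) (p ℓ : ℝ) : ℝ :=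
  timeAvg T₁ T₂ (fun t => ∫ x in Ioc (0:ℝ) 1, |u t (x + ℓ) - u t x| ^ p)

/-!
The maximum principle gives Oleinik's one-sided estimate `u_x ≤ D / (1 + σ D t)`. Since `u` has zero
mean, it follows that `|u| ≤ D`, `|u_x|₁ ≤ 2D` and `|u| ≤ 1 / (σ t)`, uniformly in `ν`.

Rescaling space and time by `ν` turns `u` into a solution with unit viscosity whose derivatives are
bounded by Bernstein's method: `|∂_x^j u| ≤ K_j ν^{-j}` for `t ≥ T₁`. For the stretched profile
`g y = u (t, ν y)`, interpolation on a unit window bounds `|g^{(m)}|^p` by a multiple of the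
integral of `|g'|` over the window, and averaging over all windows yields the upper bound because
`|u_x|₁ ≤ 2D`.

For the lower bound with `m ≥ 1`, the energy identity and the decay `|u| ≤ 1 / (σ t)` force
`∫ ν |u_x|₂² dt` over `[T₁, T₂]` to be bounded below independently of `ν`. The integrand is bounded,
and by Landau's inequality and the Lipschitz bound on `g^{(m)}` it is at most a power of
`ν^γ |u|_{m,p}`, so the latter is bounded below on a set of times of positive proportion. For
`m = 0` the energy itself plays the role of the dissipation.
-/

section PartialDerivatives

/-- Joint smoothness in time and space, for positive times. -/
def SmoothOnPosTime (u : ℝ → ℝ → ℝ) : Prop :=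
  ContDiffOn ℝ (⊤ : ℕ∞) (Function.uncurry u) (Ioi 0 ×ˢ univ)

/-- The partial derivative `∂_t u`. -/
noncomputable def timeDeriv (u : ℝ → ℝ → ℝ) (t x : ℝ) : ℝ := deriv (fun s => u s x) t

/-- The partial derivative `∂_x^j u`. -/
noncomputable def spaceDeriv (j : ℕ) (u : ℝ → ℝ → ℝ) (t x : ℝ) : ℝ := iteratedDeriv j (u t) x

@[simp]
theorem spaceDeriv_zero (u : ℝ → ℝ → ℝ) : spaceDeriv 0 u = u := by
  ext t x
  simp only [spaceDeriv, iteratedDeriv_zero]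

theorem spaceDeriv_one_eq_deriv (u : ℝ → ℝ → ℝ) (t : ℝ) : spaceDeriv 1 u t = deriv (u t) := by
  ext x
  simp only [spaceDeriv, iteratedDeriv_one]

theorem spaceDeriv_succ_eq_deriv (j : ℕ) (u : ℝ → ℝ → ℝ) (t : ℝ) :
    spaceDeriv (j + 1) u t = deriv (spaceDeriv j u t) := by
  ext x
  simp only [spaceDeriv, iteratedDeriv_succ]
  rfl

theorem spaceDeriv_succ (j : ℕ) (u : ℝ → ℝ → ℝ) :
    spaceDeriv (j + 1) u = spaceDeriv 1 (spaceDeriv j u) := by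
  ext t x
  rw [spaceDeriv_succ_eq_deriv, spaceDeriv_one_eq_deriv]

theorem spaceDeriv_spaceDeriv (i j : ℕ) (u : ℝ → ℝ → ℝ) :
    spaceDeriv i (spaceDeriv j u) = spaceDeriv (j + i) u := by
  induction i with
  | zero => rw [spaceDeriv_zero, add_zero]
  | succ i ih => rw [spaceDeriv_succ, ih, ← add_assoc, ← spaceDeriv_succ]

theorem periodic_iteratedDeriv {g : ℝ → ℝ} {L : ℝ} (hg : Function.Periodic g L) (j : ℕ) :
    Function.Periodic (iteratedDeriv j g) L := fun x => by
  rw [← congrFun (iteratedDeriv_comp_add_const j g L) x, funext hg]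

namespace SmoothOnPosTime

variable {u : ℝ → ℝ → ℝ} {t : ℝ}

theorem contDiffAt (h : SmoothOnPosTime u) (ht : 0 < t) (x : ℝ) :
    ContDiffAt ℝ (⊤ : ℕ∞) (Function.uncurry u) (t, x) :=
  ContDiffOn.contDiffAt h ((isOpen_Ioi.prod isOpen_univ).mem_nhds ⟨ht, mem_univ x⟩)

theorem hasFDerivAt (h : SmoothOnPosTime u) (ht : 0 < t) (x : ℝ) :
    HasFDerivAt (Function.uncurry u) (fderiv ℝ (Function.uncurry u) (t, x)) (t, x) :=
  ((h.contDiffAt ht x).differentiableAt (by simp)).hasFDerivAt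

theorem contDiff_slice (h : SmoothOnPosTime u) (ht : 0 < t) : ContDiff ℝ (⊤ : ℕ∞) (u t) :=
  contDiff_iff_contDiffAt.2 fun x =>
    (h.contDiffAt ht x).comp (g := Function.uncurry u) x (contDiffAt_const.prodMk contDiffAt_id)

theorem hasDerivAt_time (h : SmoothOnPosTime u) (ht : 0 < t) (x : ℝ) :
    HasDerivAt (fun s => u s x) (fderiv ℝ (Function.uncurry u) (t, x) (1, 0)) t :=
  HasFDerivAt.comp_hasDerivAt (f := fun s => (s, x)) t (h.hasFDerivAt ht x)
    ((hasDerivAt_id t).prodMk (hasDerivAt_const t x))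

theorem hasDerivAt_space (h : SmoothOnPosTime u) (ht : 0 < t) (x : ℝ) :
    HasDerivAt (u t) (fderiv ℝ (Function.uncurry u) (t, x) (0, 1)) x :=
  HasFDerivAt.comp_hasDerivAt (f := fun y => (t, y)) x (h.hasFDerivAt ht x)
    ((hasDerivAt_const x t).prodMk (hasDerivAt_id x))

theorem hasDerivAt_timeDeriv (h : SmoothOnPosTime u) (ht : 0 < t) (x : ℝ) :
    HasDerivAt (fun s => u s x) (timeDeriv u t x) t :=
  (h.hasDerivAt_time ht x).differentiableAt.hasDerivAt

theorem timeDeriv_eq_fderiv (h : SmoothOnPosTime u) (ht : 0 < t) (x : ℝ) :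
    timeDeriv u t x = fderiv ℝ (Function.uncurry u) (t, x) (1, 0) :=
  (h.hasDerivAt_time ht x).deriv

theorem spaceDeriv_one_eq_fderiv (h : SmoothOnPosTime u) (ht : 0 < t) (x : ℝ) :
    spaceDeriv 1 u t x = fderiv ℝ (Function.uncurry u) (t, x) (0, 1) := by
  rw [spaceDeriv_one_eq_deriv]
  exact (h.hasDerivAt_space ht x).deriv

theorem contDiffOn_fderiv_apply (h : SmoothOnPosTime u) (v : ℝ × ℝ) :
    ContDiffOn ℝ (⊤ : ℕ∞) (fun z => fderiv ℝ (Function.uncurry u) z v) (Ioi 0 ×ˢ univ) :=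
  (ContDiffOn.fderiv_of_isOpen h (isOpen_Ioi.prod isOpen_univ) (by simp)).clm_apply
    contDiffOn_const

protected theorem timeDeriv (h : SmoothOnPosTime u) : SmoothOnPosTime (timeDeriv u) :=
  (h.contDiffOn_fderiv_apply (1, 0)).congr fun z hz => h.timeDeriv_eq_fderiv hz.1 z.2

protected theorem spaceDeriv (h : SmoothOnPosTime u) (j : ℕ) :
    SmoothOnPosTime (spaceDeriv j u) := by
  induction j with
  | zero => rwa [spaceDeriv_zero]
  | succ j ih =>
    rw [spaceDeriv_succ]
    exact (ih.contDiffOn_fderiv_apply (0, 1)).congr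
      fun z hz => ih.spaceDeriv_one_eq_fderiv hz.1 z.2

theorem hasDerivAt_spaceDeriv (h : SmoothOnPosTime u) (j : ℕ) (ht : 0 < t) (x : ℝ) :
    HasDerivAt (spaceDeriv j u t) (spaceDeriv (j + 1) u t x) x := by
  rw [spaceDeriv_succ_eq_deriv]
  exact (((h.spaceDeriv j).contDiff_slice ht).differentiable (by simp) x).hasDerivAt

theorem timeDeriv_spaceDeriv_one (h : SmoothOnPosTime u) (ht : 0 < t) (x : ℝ) :
    timeDeriv (spaceDeriv 1 u) t x = spaceDeriv 1 (timeDeriv u) t x := by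
  have hnhds : ∀ᶠ z in nhds (t, x), z ∈ Ioi (0 : ℝ) ×ˢ (univ : Set ℝ) :=
    (isOpen_Ioi.prod isOpen_univ).mem_nhds ⟨ht, mem_univ x⟩
  have hdiff : DifferentiableAt ℝ (fderiv ℝ (Function.uncurry u)) (t, x) :=
    ((h.contDiffAt ht x).fderiv_right (m := 1) (by norm_cast)).differentiableAt (by simp)
  have fderiv_fderiv (v w : ℝ × ℝ) :
      fderiv ℝ (fun z => fderiv ℝ (Function.uncurry u) z v) (t, x) w
        = fderiv ℝ (fderiv ℝ (Function.uncurry u)) (t, x) w v := by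
    rw [fderiv_clm_apply hdiff (differentiableAt_const v)]
    simp
  have hspace : Function.uncurry (spaceDeriv 1 u) =ᶠ[nhds (t, x)]
      fun z => fderiv ℝ (Function.uncurry u) z (0, 1) :=
    hnhds.mono fun z hz => h.spaceDeriv_one_eq_fderiv hz.1 z.2
  have htime : Function.uncurry (timeDeriv u) =ᶠ[nhds (t, x)]
      fun z => fderiv ℝ (Function.uncurry u) z (1, 0) :=
    hnhds.mono fun z hz => h.timeDeriv_eq_fderiv hz.1 z.2
  have hsymm : IsSymmSndFDerivAt ℝ (Function.uncurry u) (t, x) :=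
    (h.contDiffAt ht x).isSymmSndFDerivAt (by
      simp only [minSmoothness_of_isRCLikeNormedField]
      exact WithTop.coe_le_coe.2 (le_top : (2 : ℕ∞) ≤ ⊤))
  rw [(h.spaceDeriv 1).timeDeriv_eq_fderiv ht, h.timeDeriv.spaceDeriv_one_eq_fderiv ht,
    hspace.fderiv_eq, htime.fderiv_eq, fderiv_fderiv, fderiv_fderiv]
  exact hsymm _ _

theorem timeDeriv_spaceDeriv (h : SmoothOnPosTime u) (j : ℕ) (ht : 0 < t) (x : ℝ) :
    timeDeriv (spaceDeriv j u) t x = spaceDeriv j (timeDeriv u) t x := by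
  induction j generalizing x with
  | zero => simp only [spaceDeriv_zero]
  | succ j ih =>
    rw [spaceDeriv_succ, (h.spaceDeriv j).timeDeriv_spaceDeriv_one ht,
      spaceDeriv_one_eq_deriv, spaceDeriv_succ_eq_deriv, funext ih]

theorem continuousOn (h : SmoothOnPosTime u) :
    ContinuousOn (Function.uncurry u) (Ioi 0 ×ˢ univ) :=
  ContDiffOn.continuousOn h

end SmoothOnPosTime

end PartialDerivatives

section MaximumPrinciple

theorem hasDerivAt_deriv_nonpos_of_isLocalMax {g g' : ℝ → ℝ} {g'' x₀ : ℝ}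
    (hg : ∀ x, HasDerivAt g (g' x) x) (hg' : HasDerivAt g' g'' x₀) (hmax : IsLocalMax g x₀) :
    g'' ≤ 0 := by
  have hderiv : deriv g = g' := funext fun x => (hg x).deriv
  by_contra! hpos
  -- Otherwise `x₀` is also a local minimum, so `g` is locally constant.
  have hmin : IsLocalMin g x₀ := isLocalMin_of_deriv_deriv_pos
    (by rwa [hderiv, hg'.deriv]) (hmax.hasDerivAt_eq_zero (hg x₀) ▸ (hg x₀).deriv)
    (hg x₀).continuousAt
  have hconst : g =ᶠ[nhds x₀] fun _ => g x₀ := by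
    filter_upwards [hmax, hmin] with x hle hge using le_antisymm hle hge
  have hzero : deriv (deriv g) x₀ = 0 := by
    simpa using hconst.deriv.deriv_eq
  rw [hderiv, hg'.deriv] at hzero
  exact hpos.ne' hzero

theorem hasDerivAt_nonneg_of_le_left {g : ℝ → ℝ} {g' a b : ℝ} (hab : a < b)
    (hg : HasDerivAt g g' b) (hle : ∀ s ∈ Ioo a b, g s ≤ g b) : 0 ≤ g' := by
  have hslope := (hasDerivAt_iff_tendsto_slope.1 hg).mono_left
    (nhdsWithin_mono b (show Iio b ⊆ {b}ᶜ from fun y hy => ne_of_lt hy))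
  refine ge_of_tendsto hslope ?_
  filter_upwards [Ioo_mem_nhdsLT hab] with s hs
  rw [slope_def_field]
  exact div_nonneg_of_nonpos (by linarith [hle s hs]) (by linarith [hs.2])

theorem exists_isMaxOn_of_periodic {φ : ℝ → ℝ → ℝ} {L t₀ t₁ : ℝ} (hL : 0 < L) (h01 : t₀ ≤ t₁)
    (hcont : ContinuousOn (Function.uncurry φ) (Icc t₀ t₁ ×ˢ univ))
    (hper : ∀ t ∈ Icc t₀ t₁, Function.Periodic (φ t) L) :
    ∃ s ∈ Icc t₀ t₁, ∃ y, ∀ t ∈ Icc t₀ t₁, ∀ x, φ t x ≤ φ s y := by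
  obtain ⟨⟨s, y⟩, hmem, hmax⟩ := (isCompact_Icc.prod isCompact_Icc).exists_isMaxOn
    ⟨(t₀, 0), left_mem_Icc.2 h01, left_mem_Icc.2 hL.le⟩
    (hcont.mono (prod_mono_right (subset_univ (Icc 0 L))))
  refine ⟨s, hmem.1, y, fun t ht x => ?_⟩
  obtain ⟨x', hx', hxx'⟩ := (hper t ht).exists_mem_Ico₀ hL x
  rw [hxx']
  exact hmax (show (t, x') ∈ Icc t₀ t₁ ×ˢ Icc 0 L from ⟨ht, Ico_subset_Icc_self hx'⟩)

theorem le_of_parabolic_max_principle {φ φt φx φxx : ℝ → ℝ → ℝ} {L t₀ t₁ K : ℝ} (hL : 0 < L)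
    (hcont : ContinuousOn (Function.uncurry φ) (Icc t₀ t₁ ×ˢ univ))
    (hper : ∀ t ∈ Icc t₀ t₁, Function.Periodic (φ t) L)
    (ht : ∀ t ∈ Ioc t₀ t₁, ∀ x, HasDerivAt (fun s => φ s x) (φt t x) t)
    (hx : ∀ t ∈ Ioc t₀ t₁, ∀ x, HasDerivAt (φ t) (φx t x) x)
    (hxx : ∀ t ∈ Ioc t₀ t₁, ∀ x, HasDerivAt (φx t) (φxx t x) x)
    (hineq : ∀ t ∈ Ioc t₀ t₁, ∀ x, K < φ t x → φx t x = 0 → φxx t x ≤ 0 → φt t x ≤ 0)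
    (hinit : ∀ x, φ t₀ x ≤ K) :
    ∀ t ∈ Icc t₀ t₁, ∀ x, φ t x ≤ K := by
  intro τ hτ ξ
  refine le_of_forall_pos_le_add fun δ hδ => ?_
  have hlen : 0 < τ - t₀ + 1 := by linarith [hτ.1]
  -- Subtracting `ε (t - t₀)` makes the time derivative at an interior maximum strictly positive.
  set ε := δ / (τ - t₀ + 1)
  have hε : 0 < ε := div_pos hδ hlen
  have hεδ : ε * (τ - t₀) ≤ δ := by
    have : ε * (τ - t₀ + 1) = δ := div_mul_cancel₀ δ hlen.ne'
    linarith
  obtain ⟨s, hs, y, hmax⟩ := exists_isMaxOn_of_periodic (φ := fun t x => φ t x - ε * (t - t₀)) hL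
    (hτ.1.trans hτ.2) (hcont.sub (by fun_prop))
    (fun t ht x => by simp only [hper t ht x])
  suffices φ s y - ε * (s - t₀) ≤ K by linarith [hmax τ hτ ξ]
  by_contra! hbig
  have hs₀ : t₀ < s := hs.1.lt_of_ne fun h => by
    rw [← h, sub_self, mul_zero, sub_zero] at hbig
    exact hbig.not_ge (hinit y)
  have hK : K < φ s y := hbig.trans_le (sub_le_self _ (mul_nonneg hε.le (sub_nonneg.2 hs.1)))
  have hlocal : IsLocalMax (φ s) y := .of_forall fun x => by
    linarith [hmax s hs x]
  have hφt : φt s y ≤ 0 := hineq s ⟨hs₀, hs.2⟩ y hK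
    (hlocal.hasDerivAt_eq_zero (hx s ⟨hs₀, hs.2⟩ y))
    (hasDerivAt_deriv_nonpos_of_isLocalMax (hx s ⟨hs₀, hs.2⟩) (hxx s ⟨hs₀, hs.2⟩ y) hlocal)
  have hderiv : HasDerivAt (fun r => φ r y - ε * (r - t₀)) (φt s y - ε) s := by
    simpa using (ht s ⟨hs₀, hs.2⟩ y).fun_sub (((hasDerivAt_id s).sub_const t₀).const_mul ε)
  have := hasDerivAt_nonneg_of_le_left hs₀ hderiv fun r hr =>
    hmax r ⟨hr.1.le, hr.2.le.trans hs.2⟩ y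
  linarith

end MaximumPrinciple

section Composition

variable {F : ℝ → ℝ}

theorem hasDerivAt_iteratedDeriv (hF : ContDiff ℝ (⊤ : ℕ∞) F) (n : ℕ) (x : ℝ) :
    HasDerivAt (iteratedDeriv n F) (iteratedDeriv (n + 1) F x) x := by
  rw [iteratedDeriv_succ]
  exact (hF.differentiable_iteratedDeriv n (mod_cast WithTop.coe_lt_top n) x).hasDerivAt

theorem exists_abs_le_of_continuous (hF : Continuous F) (B : ℝ) :
    ∃ C, 0 ≤ C ∧ ∀ y, |y| ≤ B → |F y| ≤ C := by
  obtain ⟨C, hC⟩ := isCompact_Icc.exists_bound_of_continuousOn (s := Icc (-B) B) hF.continuousOn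
  exact ⟨max C 0, le_max_right _ _, fun y hy => (hC y (abs_le.1 hy)).trans (le_max_left _ _)⟩

theorem exists_abs_iteratedDeriv_comp_le (hF : ContDiff ℝ (⊤ : ℕ∞) F) (n : ℕ) (B : ℝ) :
    ∃ C, 0 ≤ C ∧ ∀ g : ℝ → ℝ, ContDiff ℝ (⊤ : ℕ∞) g → ∀ x,
      (∀ i ≤ n, |iteratedDeriv i g x| ≤ B) → |iteratedDeriv n (fun y => F (g y)) x| ≤ C := by
  choose c hc₀ hc using fun i =>
    exists_abs_le_of_continuous (hF.continuous_iteratedDeriv i (mod_cast le_top)) B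
  have hsum : 0 ≤ ∑ i ∈ Finset.range (n + 1), c i := Finset.sum_nonneg fun i _ => hc₀ i
  refine ⟨n.factorial * (∑ i ∈ Finset.range (n + 1), c i) * (max 1 B) ^ n, by positivity,
    fun g hg x hB => ?_⟩
  simp only [← Real.norm_eq_abs, ← norm_iteratedFDeriv_eq_norm_iteratedDeriv] at hB hc ⊢
  refine norm_iteratedFDeriv_comp_le (n := n) hF hg (mod_cast le_top) x (fun i hi => ?_)
    (fun i hi₁ hi => (hB i hi).trans ((le_max_right 1 B).trans ?_))
  · have hgx : ‖g x‖ ≤ B := by simpa using hB 0 (Nat.zero_le n)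
    exact (hc i (g x) hgx).trans
      (Finset.single_le_sum (fun i _ => hc₀ i) (Finset.mem_range.2 (by lia)))
  · exact le_self_pow₀ (le_max_left 1 B) (by lia)

theorem iteratedDeriv_succ_comp_eq_sum {g : ℝ → ℝ} (hF : ContDiff ℝ (⊤ : ℕ∞) F)
    (hg : ContDiff ℝ (⊤ : ℕ∞) g) (n : ℕ) (x : ℝ) :
    iteratedDeriv (n + 1) (fun y => F (g y)) x = ∑ i ∈ Finset.range (n + 1),
      (n.choose i : ℝ) * iteratedDeriv i (fun y => deriv F (g y)) x
        * iteratedDeriv (n - i + 1) g x := by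
  have hchain : deriv (fun y => F (g y)) = fun y => deriv F (g y) * deriv g y := funext fun y =>
    ((hF.differentiable (by simp) (g y)).hasDerivAt.comp y
      (hg.differentiable (by simp) y).hasDerivAt).deriv
  have hF' : ContDiff ℝ (⊤ : ℕ∞) (deriv F) := by simpa using hF.iterate_deriv 1
  have hg' : ContDiff ℝ (⊤ : ℕ∞) (deriv g) := by simpa using hg.iterate_deriv 1
  have hcomp : ContDiff ℝ (⊤ : ℕ∞) (fun y => deriv F (g y)) := hF'.comp hg
  rw [iteratedDeriv_succ', hchain, iteratedDeriv_fun_mul (hcomp.of_le (mod_cast le_top)).contDiffAt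
    (hg'.of_le (mod_cast le_top)).contDiffAt]
  simp only [← iteratedDeriv_succ']

/-- What remains of `(F ∘ g)⁽ⁿ⁾` after removing the top-order term `F'(g) g⁽ⁿ⁾` of Faà di Bruno's
formula; it is used to treat the nonlinearity as a transport term plus an error. -/
noncomputable def compLowerOrder (F g : ℝ → ℝ) (n : ℕ) (x : ℝ) : ℝ :=
  iteratedDeriv n (fun y => F (g y)) x - deriv F (g x) * iteratedDeriv n g x

theorem compLowerOrder_succ {g : ℝ → ℝ} (hF : ContDiff ℝ (⊤ : ℕ∞) F)
    (hg : ContDiff ℝ (⊤ : ℕ∞) g) (n : ℕ) (x : ℝ) :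
    compLowerOrder F g (n + 1) x = ∑ i ∈ Finset.range n,
      (n.choose (i + 1) : ℝ) * iteratedDeriv (i + 1) (fun y => deriv F (g y)) x
        * iteratedDeriv (n - (i + 1) + 1) g x := by
  rw [compLowerOrder, iteratedDeriv_succ_comp_eq_sum hF hg, Finset.sum_range_succ']
  simp

theorem exists_abs_sum_le {ι α : Type*} (s : Finset ι) {P : α → Prop} {T : ι → α → ℝ}
    {W : α → ℝ} (h : ∀ i ∈ s, ∃ C, 0 ≤ C ∧ ∀ a, P a → |T i a| ≤ C * W a) :
    ∃ C, 0 ≤ C ∧ ∀ a, P a → |∑ i ∈ s, T i a| ≤ C * W a := by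
  choose! c hc₀ hc using h
  refine ⟨∑ i ∈ s, c i, Finset.sum_nonneg hc₀, fun a ha => ?_⟩
  rw [Finset.sum_mul]
  exact (Finset.abs_sum_le_sum_abs _ _).trans (Finset.sum_le_sum fun i hi => hc i hi a ha)

theorem exists_abs_compLowerOrder_succ_le (hF : ContDiff ℝ (⊤ : ℕ∞) F) (n : ℕ) (B : ℝ) :
    ∃ C, 0 ≤ C ∧ ∀ g : ℝ → ℝ, ContDiff ℝ (⊤ : ℕ∞) g → ∀ x,
      (∀ i ≤ n, |iteratedDeriv i g x| ≤ B) → |compLowerOrder F g (n + 1) x| ≤ C := by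
  have hF' : ContDiff ℝ (⊤ : ℕ∞) (deriv F) := by simpa using hF.iterate_deriv 1
  obtain ⟨C, hC₀, hC⟩ := exists_abs_sum_le (α := (ℝ → ℝ) × ℝ) (Finset.range n)
    (P := fun a => ContDiff ℝ (⊤ : ℕ∞) a.1 ∧ ∀ i ≤ n, |iteratedDeriv i a.1 a.2| ≤ B)
    (T := fun i a => (n.choose (i + 1) : ℝ) * iteratedDeriv (i + 1) (fun y => deriv F (a.1 y)) a.2
      * iteratedDeriv (n - (i + 1) + 1) a.1 a.2) (W := fun _ => 1) fun i hi => by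
    rw [Finset.mem_range] at hi
    obtain ⟨c, hc₀, hc⟩ := exists_abs_iteratedDeriv_comp_le hF' (i + 1) B
    refine ⟨n.choose (i + 1) * c * |B|, by positivity, fun ⟨g, x⟩ ⟨hg, hB⟩ => ?_⟩
    rw [abs_mul, abs_mul, Nat.abs_cast, mul_one]
    gcongr _ * ?_ * ?_
    · exact hc g hg x fun k hk => hB k (by lia)
    · exact (hB _ (by lia)).trans (le_abs_self B)
  refine ⟨C, hC₀, fun g hg x hB => ?_⟩
  rw [compLowerOrder_succ hF hg]
  simpa only [mul_one] using hC (g, x) ⟨hg, hB⟩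

theorem exists_abs_iteratedDeriv_succ_comp_le (hF : ContDiff ℝ (⊤ : ℕ∞) F) (n : ℕ) (B : ℝ) :
    ∃ C, 0 ≤ C ∧ ∀ g : ℝ → ℝ, ContDiff ℝ (⊤ : ℕ∞) g → ∀ x,
      (∀ i ≤ n, |iteratedDeriv i g x| ≤ B) →
      |iteratedDeriv (n + 1) (fun y => F (g y)) x| ≤ C * (1 + |iteratedDeriv (n + 1) g x|) := by
  obtain ⟨C, hC₀, hC⟩ := exists_abs_compLowerOrder_succ_le hF n B
  obtain ⟨c, hc₀, hc⟩ := exists_abs_le_of_continuous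
    (by simpa using (hF.iterate_deriv 1).continuous : Continuous (deriv F)) B
  refine ⟨C + c, by positivity, fun g hg x hB => ?_⟩
  have hgx : |g x| ≤ B := by simpa using hB 0 (Nat.zero_le n)
  calc |iteratedDeriv (n + 1) (fun y => F (g y)) x|
      = |compLowerOrder F g (n + 1) x + deriv F (g x) * iteratedDeriv (n + 1) g x| := by
        rw [compLowerOrder, sub_add_cancel]
    _ ≤ C + c * |iteratedDeriv (n + 1) g x| := by
        refine (abs_add_le _ _).trans ?_
        rw [abs_mul]
        gcongr
        exacts [hC g hg x hB, hc _ hgx]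
    _ ≤ (C + c) * (1 + |iteratedDeriv (n + 1) g x|) := by
        nlinarith [mul_nonneg hC₀ (abs_nonneg (iteratedDeriv (n + 1) g x))]

theorem exists_abs_compLowerOrder_succ_succ_le (hF : ContDiff ℝ (⊤ : ℕ∞) F) {n : ℕ} (hn : 1 ≤ n)
    (B : ℝ) :
    ∃ C, 0 ≤ C ∧ ∀ g : ℝ → ℝ, ContDiff ℝ (⊤ : ℕ∞) g → ∀ x,
      (∀ i ≤ n, |iteratedDeriv i g x| ≤ B) →
      |compLowerOrder F g (n + 2) x| ≤ C * (1 + |iteratedDeriv (n + 1) g x|) := by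
  have hF' : ContDiff ℝ (⊤ : ℕ∞) (deriv F) := by simpa using hF.iterate_deriv 1
  obtain ⟨C, hC₀, hC⟩ := exists_abs_sum_le (α := (ℝ → ℝ) × ℝ) (Finset.range (n + 1))
    (P := fun a => ContDiff ℝ (⊤ : ℕ∞) a.1 ∧ ∀ i ≤ n, |iteratedDeriv i a.1 a.2| ≤ B)
    (T := fun i a => ((n + 1).choose (i + 1) : ℝ)
      * iteratedDeriv (i + 1) (fun y => deriv F (a.1 y)) a.2
      * iteratedDeriv (n + 1 - (i + 1) + 1) a.1 a.2)
    (W := fun a => 1 + |iteratedDeriv (n + 1) a.1 a.2|) fun i hi => by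
    rw [Finset.mem_range] at hi
    -- At most one factor is of order `n + 1`: the first one if `i = n`, the second one if `i = 0`.
    rcases (Nat.lt_succ_iff.1 hi).lt_or_eq with hin | rfl
    · obtain ⟨c, hc₀, hc⟩ := exists_abs_iteratedDeriv_comp_le hF' (i + 1) B
      refine ⟨(n + 1).choose (i + 1) * c * (|B| + 1), by positivity, fun ⟨g, x⟩ ⟨hg, hB⟩ => ?_⟩
      have hlast : |iteratedDeriv (n + 1 - (i + 1) + 1) g x|
          ≤ (|B| + 1) * (1 + |iteratedDeriv (n + 1) g x|) := by
        have hB' := abs_nonneg B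
        have hw := abs_nonneg (iteratedDeriv (n + 1) g x)
        rcases Nat.eq_zero_or_pos i with rfl | hi₀
        · simp only [zero_add, Nat.add_sub_cancel]
          nlinarith
        · nlinarith [(hB (n + 1 - (i + 1) + 1) (by lia)).trans (le_abs_self B)]
      rw [abs_mul, abs_mul, Nat.abs_cast, mul_assoc _ (|B| + 1)]
      gcongr
      exact hc g hg x fun k hk => hB k (by lia)
    · obtain ⟨c, hc₀, hc⟩ := exists_abs_iteratedDeriv_succ_comp_le hF' i B
      refine ⟨(i + 1).choose (i + 1) * c * |B|, by positivity, fun ⟨g, x⟩ ⟨hg, hB⟩ => ?_⟩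
      rw [abs_mul, abs_mul, Nat.abs_cast, mul_right_comm _ |B|, mul_assoc _ c]
      gcongr _ * ?_ * ?_
      · exact hc g hg x hB
      · exact (hB _ (by lia)).trans (le_abs_self B)
  refine ⟨C, hC₀, fun g hg x hB => ?_⟩
  rw [compLowerOrder_succ hF hg]
  exact hC (g, x) ⟨hg, hB⟩

end Composition

section BernsteinEstimate

theorem mul_abs_le_mul_one_add_two_sq {w s C : ℝ} (hs : |s| ≤ C * (1 + |w|)) :
    |w * s| ≤ C * (1 + 2 * w ^ 2) := by
  have hw := abs_nonneg w
  have hC : 0 ≤ C := by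
    by_contra! hC
    nlinarith [(abs_nonneg s).trans hs]
  calc |w * s| ≤ |w| * (C * (1 + |w|)) := by
        rw [abs_mul]
        gcongr
    _ = C * (|w| + w ^ 2) := by rw [← sq_abs w]; ring
    _ ≤ C * (1 + 2 * w ^ 2) := by
        refine mul_le_mul_of_nonneg_left ?_ hC
        nlinarith [sq_nonneg (|w| - 1), sq_abs w]

/-- If the weight `q w² + λ y²` is critical in space with nonpositive second derivative, then the
good terms `-2 q w₁² - 2 λ w²` produced by the diffusion absorb all the others. -/
theorem bernstein_weight_inequality {q δ y w w₁ w₂ a r s B Cr Cs l : ℝ} (hq : 0 ≤ q) (hqδ : q ≤ δ)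
    (hl : l = 1 + 2 * δ * Cs) (hy : |y| ≤ B) (hr : |r| ≤ Cr) (hs : |s| ≤ Cs * (1 + |w|))
    (hcrit : q * (2 * w * w₁) + l * (2 * y * w) = 0)
    (hconcave : q * (2 * w₁ * w₁ + 2 * w * w₂) + l * (2 * w * w + 2 * y * w₁) ≤ 0) :
    w ^ 2 + q * (2 * w * (w₂ - a * w₁ - s)) + l * (2 * y * (w₁ - a * w - r))
      - (2 * δ * Cs + 2 * l * B * Cr) ≤ 0 := by
  have hB : 0 ≤ B := (abs_nonneg y).trans hy
  have hws := mul_abs_le_mul_one_add_two_sq hs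
  have hpos : 0 ≤ Cs * (1 + 2 * w ^ 2) := (abs_nonneg _).trans hws
  have hCs : 0 ≤ Cs := nonneg_of_mul_nonneg_left hpos (by positivity)
  have hl₀ : 0 ≤ l := by
    have : 0 ≤ δ := hq.trans hqδ
    rw [hl]
    positivity
  have hqs : q * (-(w * s)) ≤ δ * (Cs * (1 + 2 * w ^ 2)) :=
    (mul_le_mul_of_nonneg_left ((neg_le_abs _).trans hws) hq).trans
      (mul_le_mul_of_nonneg_right hqδ hpos)
  have hlr : l * (-(y * r)) ≤ l * (B * Cr) := by
    gcongr
    exact (neg_le_abs _).trans ((abs_mul y r).trans_le (mul_le_mul hy hr (abs_nonneg r) hB))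
  have hexpand : w ^ 2 + q * (2 * w * (w₂ - a * w₁ - s)) + l * (2 * y * (w₁ - a * w - r))
      = -a * (q * (2 * w * w₁) + l * (2 * y * w))
        + (q * (2 * w₁ * w₁ + 2 * w * w₂) + l * (2 * w * w + 2 * y * w₁))
        + w ^ 2 - 2 * (q * w₁ ^ 2) + 2 * (q * (-(w * s))) - 2 * (l * w ^ 2)
        + 2 * (l * (-(y * r))) := by
    ring
  have hlw : l * w ^ 2 = w ^ 2 + 2 * (δ * Cs * w ^ 2) := by
    rw [hl]
    ring
  rw [hexpand, hcrit]
  linarith [mul_nonneg hq (sq_nonneg w₁), sq_nonneg w]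

/-- The auxiliary function `(t - t₀) y_x² + l y² - K (t - t₀)` of Bernstein's method: at time `t₀`
it only involves `y`, so that bounding it bounds `y_x` by `y` at later times. -/
noncomputable def bernsteinWeight (l K t₀ : ℝ) (y : ℝ → ℝ → ℝ) (t x : ℝ) : ℝ :=
  (t - t₀) * spaceDeriv 1 y t x ^ 2 + l * spaceDeriv 0 y t x ^ 2 - K * (t - t₀)

section BernsteinWeight

variable {y : ℝ → ℝ → ℝ} {t : ℝ} (hy : SmoothOnPosTime y) (l K t₀ : ℝ)
include hy

theorem continuousOn_bernsteinWeight {s : Set ℝ} (hs : s ⊆ Ioi 0) :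
    ContinuousOn (Function.uncurry (bernsteinWeight l K t₀ y)) (s ×ˢ univ) := by
  have hcont (j : ℕ) : ContinuousOn (Function.uncurry (spaceDeriv j y)) (s ×ˢ univ) :=
    (hy.spaceDeriv j).continuousOn.mono (prod_mono_left hs)
  exact ((ContinuousOn.mul (by fun_prop) ((hcont 1).pow 2)).add
    (continuousOn_const.mul ((hcont 0).pow 2))).sub (by fun_prop)

theorem hasDerivAt_bernsteinWeight_time (ht : 0 < t) (x : ℝ) :
    HasDerivAt (fun s => bernsteinWeight l K t₀ y s x)
      (spaceDeriv 1 y t x ^ 2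
        + (t - t₀) * (2 * spaceDeriv 1 y t x * timeDeriv (spaceDeriv 1 y) t x)
        + l * (2 * spaceDeriv 0 y t x * timeDeriv (spaceDeriv 0 y) t x) - K) t := by
  have hderiv (j : ℕ) := (hy.spaceDeriv j).hasDerivAt_timeDeriv ht x
  have hlin : HasDerivAt (fun s : ℝ => s - t₀) 1 t := (hasDerivAt_id t).sub_const t₀
  refine (((hlin.mul ((hderiv 1).pow 2)).add (((hderiv 0).pow 2).const_mul l)).sub
    (hlin.const_mul K)).congr_deriv ?_
  simp

theorem hasDerivAt_bernsteinWeight_space (ht : 0 < t) (x : ℝ) :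
    HasDerivAt (bernsteinWeight l K t₀ y t)
      ((t - t₀) * (2 * spaceDeriv 1 y t x * spaceDeriv 2 y t x)
        + l * (2 * spaceDeriv 0 y t x * spaceDeriv 1 y t x)) x := by
  have hderiv (j : ℕ) := hy.hasDerivAt_spaceDeriv j ht x
  refine (((((hderiv 1).pow 2).const_mul (t - t₀)).add
    (((hderiv 0).pow 2).const_mul l)).sub_const (K * (t - t₀))).congr_deriv ?_
  simp

theorem hasDerivAt_bernsteinWeight_space_space (ht : 0 < t) (x : ℝ) :
    HasDerivAt (fun x => (t - t₀) * (2 * spaceDeriv 1 y t x * spaceDeriv 2 y t x)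
        + l * (2 * spaceDeriv 0 y t x * spaceDeriv 1 y t x))
      ((t - t₀) * (2 * spaceDeriv 2 y t x * spaceDeriv 2 y t x
          + 2 * spaceDeriv 1 y t x * spaceDeriv 3 y t x)
        + l * (2 * spaceDeriv 1 y t x * spaceDeriv 1 y t x
          + 2 * spaceDeriv 0 y t x * spaceDeriv 2 y t x)) x := by
  have hderiv (j : ℕ) := hy.hasDerivAt_spaceDeriv j ht x
  exact ((((hderiv 1).const_mul 2).mul (hderiv 2)).const_mul (t - t₀)).add
    ((((hderiv 0).const_mul 2).mul (hderiv 1)).const_mul l)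

end BernsteinWeight

theorem bernstein_gradient_estimate {y a r s : ℝ → ℝ → ℝ} {L B Cr Cs t₀ t₁ : ℝ} (hL : 0 < L)
    (hy : SmoothOnPosTime y) (hper : ∀ t, Function.Periodic (y t) L) (ht₀ : 0 < t₀) (h01 : t₀ ≤ t₁)
    (heq : ∀ t ∈ Icc t₀ t₁, ∀ x,
      timeDeriv y t x = spaceDeriv 2 y t x - a t x * spaceDeriv 1 y t x - r t x)
    (heq' : ∀ t ∈ Icc t₀ t₁, ∀ x, timeDeriv (spaceDeriv 1 y) t x
      = spaceDeriv 3 y t x - a t x * spaceDeriv 2 y t x - s t x)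
    (hB : ∀ t ∈ Icc t₀ t₁, ∀ x, |y t x| ≤ B) (hr : ∀ t ∈ Icc t₀ t₁, ∀ x, |r t x| ≤ Cr)
    (hs : ∀ t ∈ Icc t₀ t₁, ∀ x, |s t x| ≤ Cs * (1 + |spaceDeriv 1 y t x|)) (x : ℝ) :
    (t₁ - t₀) * spaceDeriv 1 y t₁ x ^ 2 ≤ (1 + 2 * (t₁ - t₀) * Cs) * B ^ 2
      + (2 * (t₁ - t₀) * Cs + 2 * (1 + 2 * (t₁ - t₀) * Cs) * B * Cr) * (t₁ - t₀) := by
  have hCs : 0 ≤ Cs := nonneg_of_mul_nonneg_left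
    ((abs_nonneg _).trans (hs t₀ (left_mem_Icc.2 h01) 0)) (by positivity)
  have hδ : 0 ≤ t₁ - t₀ := sub_nonneg.2 h01
  set l := 1 + 2 * (t₁ - t₀) * Cs with hl
  set K := 2 * (t₁ - t₀) * Cs + 2 * l * B * Cr
  have hl₀ : 0 ≤ l := add_nonneg zero_le_one (mul_nonneg (mul_nonneg zero_le_two hδ) hCs)
  have hpos {t : ℝ} (ht : t ∈ Ioc t₀ t₁) : 0 < t := ht₀.trans ht.1
  have hweight : bernsteinWeight l K t₀ y t₁ x ≤ l * B ^ 2 :=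
    le_of_parabolic_max_principle hL
      (continuousOn_bernsteinWeight hy l K t₀ fun t ht => ht₀.trans_le ht.1)
      (fun t _ x => by
        simp only [bernsteinWeight, spaceDeriv, periodic_iteratedDeriv (hper t) _ x])
      (fun t ht => hasDerivAt_bernsteinWeight_time hy l K t₀ (hpos ht))
      (fun t ht => hasDerivAt_bernsteinWeight_space hy l K t₀ (hpos ht))
      (fun t ht => hasDerivAt_bernsteinWeight_space_space hy l t₀ (hpos ht))
      (fun t ht x _ hx hxx => by
        have ht' := Ioc_subset_Icc_self ht
        simp only [spaceDeriv_zero, heq t ht' x, heq' t ht' x] at hx hxx ⊢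
        exact bernstein_weight_inequality (sub_nonneg.2 ht.1.le) (sub_le_sub_right ht.2 t₀) hl
          (hB t ht' x) (hr t ht' x) (hs t ht' x) hx hxx)
      (fun x => by
        simp only [bernsteinWeight, sub_self, zero_mul, mul_zero, zero_add, sub_zero,
          spaceDeriv_zero]
        exact mul_le_mul_of_nonneg_left
          (sq_le_sq.2 ((hB t₀ (left_mem_Icc.2 h01) x).trans (le_abs_self B))) hl₀)
      t₁ (right_mem_Icc.2 h01) x
  rw [bernsteinWeight] at hweight
  linarith [mul_nonneg hl₀ (sq_nonneg (spaceDeriv 0 y t₁ x))]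

end BernsteinEstimate

section UnitViscosity

/-- A smooth solution of `v_t + f'(v) v_x = ν v_xx` for positive times. No period is fixed, so that
the notion is stable under rescaling. -/
structure IsClassicalSolution (f : ℝ → ℝ) (ν : ℝ) (v : ℝ → ℝ → ℝ) : Prop where
  smooth : SmoothOnPosTime v
  pde : ∀ t, 0 < t → ∀ x,
    timeDeriv v t x + deriv f (v t x) * spaceDeriv 1 v t x = ν * spaceDeriv 2 v t x

/-- An `L`-periodic solution of the equation with unit viscosity such that `|v| ≤ D₀` and
`|v_x| ≤ D₁`: the output of the rescaling of a solution of small viscosity. -/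
structure IsLipschitzUnitSolution (f : ℝ → ℝ) (L D₀ D₁ : ℝ) (v : ℝ → ℝ → ℝ) : Prop
    extends IsClassicalSolution f 1 v where
  period_pos : 0 < L
  periodic : ∀ t, Function.Periodic (v t) L
  abs_le : ∀ t, 0 < t → ∀ x, |v t x| ≤ D₀
  abs_spaceDeriv_one_le : ∀ t, 0 < t → ∀ x, |spaceDeriv 1 v t x| ≤ D₁

variable {f : ℝ → ℝ}

theorem IsClassicalSolution.timeDeriv_spaceDeriv_eq {ν : ℝ} {v : ℝ → ℝ → ℝ}
    (hf : ContDiff ℝ (⊤ : ℕ∞) f) (hv : IsClassicalSolution f ν v) (j : ℕ) {t : ℝ} (ht : 0 < t)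
    (x : ℝ) :
    timeDeriv (spaceDeriv j v) t x = ν * spaceDeriv (j + 2) v t x
      - deriv f (v t x) * spaceDeriv (j + 1) v t x - compLowerOrder f (v t) (j + 1) x := by
  have hvt := hv.smooth.contDiff_slice ht
  have hchain : ∀ y, deriv (fun y => f (v t y)) y = deriv f (v t y) * spaceDeriv 1 v t y := fun y =>
    ((hf.differentiable (by simp) (v t y)).hasDerivAt.comp y (by
      simpa only [spaceDeriv_zero] using hv.smooth.hasDerivAt_spaceDeriv 0 ht y)).deriv
  have htime : timeDeriv v t = fun y => ν * spaceDeriv 2 v t y - deriv (fun y => f (v t y)) y :=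
    funext fun y => by linarith [hv.pde t ht y, hchain y]
  have hsmooth₂ : ContDiff ℝ (⊤ : ℕ∞) (fun y => ν * spaceDeriv 2 v t y) :=
    contDiff_const.mul ((hv.smooth.spaceDeriv 2).contDiff_slice ht)
  have hsmooth₁ : ContDiff ℝ (⊤ : ℕ∞) (deriv fun y => f (v t y)) := by
    simpa [Function.comp_def] using (hf.comp hvt).iterate_deriv 1
  rw [hv.smooth.timeDeriv_spaceDeriv j ht, spaceDeriv, htime,
    iteratedDeriv_fun_sub (hsmooth₂.of_le (mod_cast le_top)).contDiffAt
      (hsmooth₁.of_le (mod_cast le_top)).contDiffAt,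
    iteratedDeriv_const_mul_field, ← iteratedDeriv_succ', add_comm j 2, ← spaceDeriv_spaceDeriv]
  simp only [compLowerOrder, spaceDeriv]
  ring

theorem exists_abs_spaceDeriv_le_of_isLipschitzUnitSolution (hf : ContDiff ℝ (⊤ : ℕ∞) f)
    (D₀ D₁ : ℝ) (j : ℕ) : ∀ τ > 0, ∃ C, 0 ≤ C ∧ ∀ L v, IsLipschitzUnitSolution f L D₀ D₁ v →
      ∀ t ≥ τ, ∀ x, ∀ i ≤ j + 1, |spaceDeriv i v t x| ≤ C := by
  induction j with
  | zero =>
    intro τ hτ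
    refine ⟨max 0 (max D₀ D₁), le_max_left _ _, fun L v hv t ht x i hi => le_max_of_le_right ?_⟩
    interval_cases i
    · exact le_max_of_le_left (spaceDeriv_zero v ▸ hv.abs_le t (hτ.trans_le ht) x)
    · exact le_max_of_le_right (hv.abs_spaceDeriv_one_le t (hτ.trans_le ht) x)
  | succ j ih =>
    intro τ hτ
    obtain ⟨B, hB₀, hB⟩ := ih (τ / 2) (by positivity)
    obtain ⟨Cr, -, hr⟩ := exists_abs_compLowerOrder_succ_le hf (j + 1) B
    obtain ⟨Cs, -, hs⟩ := exists_abs_compLowerOrder_succ_succ_le hf (Nat.le_add_left 1 j) B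
    set M := (1 + 2 * (τ / 2) * Cs) * B ^ 2
      + (2 * (τ / 2) * Cs + 2 * (1 + 2 * (τ / 2) * Cs) * B * Cr) * (τ / 2) with hM
    refine ⟨max B √(M / (τ / 2)), le_max_of_le_left hB₀, fun L v hv t ht x i hi => ?_⟩
    rcases Nat.lt_or_eq_of_le hi with hi | rfl
    · exact le_max_of_le_left (hB L v hv t (by linarith) x i (by lia))
    refine le_max_of_le_right (Real.abs_le_sqrt ?_)
    have hest := bernstein_gradient_estimate (y := spaceDeriv (j + 1) v)
      (a := fun s x => deriv f (v s x)) (r := fun s => compLowerOrder f (v s) (j + 2))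
      (s := fun s => compLowerOrder f (v s) (j + 3)) (B := B) (Cr := Cr) (Cs := Cs)
      (t₀ := t - τ / 2) (t₁ := t) hv.period_pos (hv.smooth.spaceDeriv _)
      (fun s => periodic_iteratedDeriv (hv.periodic s) _) (by linarith) (by linarith)
    simp only [spaceDeriv_spaceDeriv, sub_sub_cancel, ← hM] at hest
    rw [le_div_iff₀ (half_pos hτ), mul_comm]
    have hpos {s : ℝ} (hs : s ∈ Icc (t - τ / 2) t) : 0 < s := by linarith [hs.1]
    have hbound {s : ℝ} (hs : s ∈ Icc (t - τ / 2) t) (x : ℝ) (i : ℕ) (hi : i ≤ j + 1) :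
        |spaceDeriv i v s x| ≤ B := hB L v hv s (by linarith [hs.1]) x i hi
    refine hest (fun s hs x => ?_) (fun s hs x => ?_) (fun s hs x => hbound hs x _ le_rfl)
      (fun s hs' x => hr (v s) (hv.smooth.contDiff_slice (hpos hs')) x (hbound hs' x))
      (fun s hs' x => hs (v s) (hv.smooth.contDiff_slice (hpos hs')) x (hbound hs' x)) x
    · rw [hv.timeDeriv_spaceDeriv_eq hf (j + 1) (hpos hs), one_mul]
    · rw [hv.timeDeriv_spaceDeriv_eq hf (j + 2) (hpos hs), one_mul]

end UnitViscosity

section SobolevNorms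

variable {m : ℕ} {p q : ℝ≥0∞} {v w : ℝ → ℝ} {C : ℝ}

instance isProbabilityMeasure_restrict_Ioc_zero_one :
    IsProbabilityMeasure (volume.restrict (Ioc (0 : ℝ) 1)) :=
  ⟨by simp⟩

theorem memLp_restrict_Ioc_of_continuous {g : ℝ → ℝ} (hg : Continuous g) (p : ℝ≥0∞) (a b : ℝ) :
    MemLp g p (volume.restrict (Ioc a b)) := by
  obtain ⟨C, hC⟩ := isCompact_Icc.exists_bound_of_continuousOn (s := Icc a b) hg.continuousOn
  exact MemLp.of_bound hg.aestronglyMeasurable C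
    ((ae_restrict_iff' measurableSet_Ioc).2 (ae_of_all _ fun x hx => hC x (Ioc_subset_Icc_self hx)))

theorem sobLp_eq_lpNorm (hv : Continuous (iteratedDeriv m v)) :
    sobLp m p v = lpNorm (iteratedDeriv m v) p (volume.restrict (Ioc 0 1)) :=
  toReal_eLpNorm hv.aestronglyMeasurable

theorem sobLp_nonneg (m : ℕ) (p : ℝ≥0∞) (v : ℝ → ℝ) : 0 ≤ sobLp m p v := ENNReal.toReal_nonneg

theorem sobLp_le_of_forall_abs_le (hC : 0 ≤ C) (hv : ∀ x ∈ Ioc 0 1, |iteratedDeriv m v x| ≤ C) :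
    sobLp m p v ≤ C := by
  refine ENNReal.toReal_le_of_le_ofReal hC ?_
  simpa using eLpNorm_le_of_ae_bound (p := p) (f := iteratedDeriv m v)
    ((ae_restrict_iff' measurableSet_Ioc).2 (ae_of_all volume hv))

theorem abs_iteratedDeriv_le_sobLp_top (hv : Continuous (iteratedDeriv m v))
    (hper : Function.Periodic v 1) (x : ℝ) : |iteratedDeriv m v x| ≤ sobLp m ⊤ v := by
  have hae : (fun y => max |iteratedDeriv m v y| (sobLp m ⊤ v))
      =ᵐ[volume.restrict (Ioc 0 1)] fun _ => sobLp m ⊤ v := by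
    rw [sobLp_eq_lpNorm hv]
    filter_upwards [ae_le_lpNorm_exponent_top (memLp_restrict_Ioc_of_continuous hv ⊤ 0 1)] with y hy
    exact max_eq_right hy
  obtain ⟨y, hy, hxy⟩ := (periodic_iteratedDeriv hper m).exists_mem_Ioc one_pos x 0
  rw [zero_add] at hy
  rw [hxy]
  exact max_eq_right_iff.1
    (Measure.eqOn_Ioc_of_ae_eq volume hae (by fun_prop) continuousOn_const hy)

theorem sobLp_eq_integral_rpow (hv : Continuous (iteratedDeriv m v)) (hp₀ : p ≠ 0) (hp : p ≠ ⊤) :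
    sobLp m p v = (∫ x in (0 : ℝ)..1, |iteratedDeriv m v x| ^ p.toReal) ^ p.toReal⁻¹ := by
  rw [sobLp_eq_lpNorm hv, lpNorm_eq_integral_norm_rpow_toReal hp₀ hp hv.aestronglyMeasurable,
    intervalIntegral.integral_of_le zero_le_one]
  rfl

theorem sobLp_one_eq_integral (hv : Continuous (iteratedDeriv m v)) :
    sobLp m 1 v = ∫ x in (0 : ℝ)..1, |iteratedDeriv m v x| := by
  simp [sobLp_eq_integral_rpow hv]

theorem sobLp_two_sq_eq_integral (hv : Continuous (iteratedDeriv m v)) :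
    sobLp m 2 v ^ 2 = ∫ x in (0 : ℝ)..1, iteratedDeriv m v x ^ 2 := by
  have hnonneg : 0 ≤ ∫ x in (0 : ℝ)..1, iteratedDeriv m v x ^ 2 :=
    intervalIntegral.integral_nonneg zero_le_one fun _ _ => sq_nonneg _
  simp only [sobLp_eq_integral_rpow hv two_ne_zero ENNReal.ofNat_ne_top, ENNReal.toReal_ofNat,
    Real.rpow_ofNat, sq_abs]
  rw [← Real.rpow_natCast, ← Real.rpow_mul hnonneg]
  norm_num

theorem sobLp_le_sobLp_of_le (hv : Continuous (iteratedDeriv m v)) (hpq : p ≤ q) :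
    sobLp m p v ≤ sobLp m q v :=
  ENNReal.toReal_mono (memLp_restrict_Ioc_of_continuous hv q 0 1).eLpNorm_ne_top
    (eLpNorm_le_eLpNorm_of_exponent_le hpq hv.aestronglyMeasurable)

theorem sobLp_le_sobLp_add (hv : Continuous (iteratedDeriv m v))
    (hw : Continuous (iteratedDeriv m w)) (hp : 1 ≤ p) (hC : 0 ≤ C)
    (hvw : ∀ x ∈ Ioc 0 1, |iteratedDeriv m v x - iteratedDeriv m w x| ≤ C) :
    sobLp m p v ≤ sobLp m p w + C := by
  have hsub : lpNorm (iteratedDeriv m v - iteratedDeriv m w) p (volume.restrict (Ioc 0 1)) ≤ C := by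
    rw [← toReal_eLpNorm (hv.sub hw).aestronglyMeasurable]
    refine ENNReal.toReal_le_of_le_ofReal hC ?_
    simpa using eLpNorm_le_of_ae_bound (p := p) (f := iteratedDeriv m v - iteratedDeriv m w)
      ((ae_restrict_iff' measurableSet_Ioc).2 (ae_of_all volume hvw))
  rw [sobLp_eq_lpNorm hv, sobLp_eq_lpNorm hw]
  exact (lpNorm_le_lpNorm_add_lpNorm_sub' (memLp_restrict_Ioc_of_continuous hw p 0 1) hp).trans
    (by gcongr)

theorem integral_sq_le_mul_integral_abs {g : ℝ → ℝ} {B a b : ℝ} (hab : a ≤ b) (hg : Continuous g)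
    (hB : ∀ x, |g x| ≤ B) : ∫ x in a..b, g x ^ 2 ≤ B * ∫ x in a..b, |g x| := by
  rw [← intervalIntegral.integral_const_mul]
  refine intervalIntegral.integral_mono_on hab ((hg.pow 2).intervalIntegrable _ _)
    ((hg.abs.const_mul B).intervalIntegrable _ _) fun x _ => ?_
  rw [← sq_abs, sq]
  exact mul_le_mul_of_nonneg_right (hB x) (abs_nonneg _)

end SobolevNorms

section OneSidedDerivativeBound

variable {g : ℝ → ℝ} {K : ℝ}

theorem nonneg_of_periodic_of_deriv_le (hg : Differentiable ℝ g) (hper : Function.Periodic g 1)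
    (hK : ∀ x, deriv g x ≤ K) : 0 ≤ K := by
  have hinc := image_sub_le_mul_sub_of_deriv_le hg hK zero_le_one
  rwa [hper.eq, sub_self, sub_zero, mul_one] at hinc

theorem abs_le_of_deriv_le_of_integral_eq_zero (hg : Differentiable ℝ g)
    (hper : Function.Periodic g 1) (hint : ∫ x in (0 : ℝ)..1, g x = 0)
    (hK : ∀ x, deriv g x ≤ K) (x : ℝ) : |g x| ≤ K := by
  have hK₀ := nonneg_of_periodic_of_deriv_le hg hper hK
  obtain ⟨z, -, hz⟩ := exists_eq_interval_average zero_ne_one hg.continuous.continuousOn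
  rw [interval_average_eq, hint, smul_zero] at hz
  obtain ⟨y, hy, hxy⟩ := hper.exists_mem_Ioc one_pos x z
  have hleft := image_sub_le_mul_sub_of_deriv_le hg hK hy.1.le
  have hright := image_sub_le_mul_sub_of_deriv_le hg hK hy.2
  rw [hper z, hz] at hright
  rw [hxy, abs_le]
  constructor <;> nlinarith [hy.1, hy.2]

theorem integral_abs_deriv_le_two_mul (hg : ContDiff ℝ 1 g) (hper : Function.Periodic g 1)
    (hK : ∀ x, deriv g x ≤ K) : ∫ x in (0 : ℝ)..1, |deriv g x| ≤ 2 * K := by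
  have hdiff := hg.differentiable one_ne_zero
  have hK₀ := nonneg_of_periodic_of_deriv_le hdiff hper hK
  have hcont : Continuous (deriv g) := hg.continuous_deriv le_rfl
  have hzero : ∫ x in (0 : ℝ)..1, deriv g x = 0 := by
    rw [intervalIntegral.integral_deriv_eq_sub (fun x _ => hdiff x)
      (hcont.intervalIntegrable _ _), hper.eq, sub_self]
  calc ∫ x in (0 : ℝ)..1, |deriv g x| ≤ ∫ x in (0 : ℝ)..1, (2 * K - deriv g x) :=
        intervalIntegral.integral_mono_on zero_le_one (hcont.abs.intervalIntegrable _ _)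
          ((continuous_const.sub hcont).intervalIntegrable _ _) fun x _ => by
            rw [abs_le]
            constructor <;> linarith [hK x]
    _ = 2 * K := by
        rw [intervalIntegral.integral_sub (intervalIntegrable_const)
          (hcont.intervalIntegrable _ _), hzero]
        simp

end OneSidedDerivativeBound

section ViscousFlux

variable {f : ℝ → ℝ} {ν : ℝ} {v : ℝ → ℝ → ℝ}

theorem compLowerOrder_two {F g : ℝ → ℝ} (hF : ContDiff ℝ (⊤ : ℕ∞) F)
    (hg : ContDiff ℝ (⊤ : ℕ∞) g) (x : ℝ) :
    compLowerOrder F g 2 x = iteratedDeriv 2 F (g x) * iteratedDeriv 1 g x ^ 2 := by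
  have hchain := (hasDerivAt_iteratedDeriv hF 1 (g x)).comp x
    (hg.differentiable (by simp) x).hasDerivAt
  simp only [iteratedDeriv_one, Function.comp_def] at hchain
  simp only [compLowerOrder_succ hF hg 1, Finset.sum_range_one, zero_add, iteratedDeriv_one,
    hchain.deriv, Nat.choose_self, Nat.cast_one, one_mul, Nat.sub_self, Nat.reduceAdd]
  ring

theorem IsClassicalSolution.timeDeriv_spaceDeriv_one_eq (hv : IsClassicalSolution f ν v)
    (hf : ContDiff ℝ (⊤ : ℕ∞) f) {t : ℝ} (ht : 0 < t) (x : ℝ) :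
    timeDeriv (spaceDeriv 1 v) t x = ν * spaceDeriv 3 v t x
      - deriv f (v t x) * spaceDeriv 2 v t x
      - iteratedDeriv 2 f (v t x) * spaceDeriv 1 v t x ^ 2 := by
  rw [hv.timeDeriv_spaceDeriv_eq hf 1 ht, compLowerOrder_two hf (hv.smooth.contDiff_slice ht)]
  rfl

/-- The quantity `ν v_x - f(v)`. Its space derivative is `v_t`, so that it satisfies the linear
equation `φ_t + f'(v) φ_x = ν φ_xx` and hence the maximum principle. -/
noncomputable def viscousFlux (f : ℝ → ℝ) (ν : ℝ) (v : ℝ → ℝ → ℝ) (t x : ℝ) : ℝ :=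
  ν * spaceDeriv 1 v t x - f (v t x)

namespace IsClassicalSolution

variable {t : ℝ}

theorem hasDerivAt_viscousFlux_time (hv : IsClassicalSolution f ν v)
    (hf : ContDiff ℝ (⊤ : ℕ∞) f) (ht : 0 < t) (x : ℝ) :
    HasDerivAt (fun s => viscousFlux f ν v s x)
      (ν * timeDeriv (spaceDeriv 1 v) t x - deriv f (v t x) * timeDeriv v t x) t :=
  (((hv.smooth.spaceDeriv 1).hasDerivAt_timeDeriv ht x).const_mul ν).sub
    ((hf.differentiable (by simp) (v t x)).hasDerivAt.comp t (hv.smooth.hasDerivAt_timeDeriv ht x))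

theorem hasDerivAt_viscousFlux_space (hv : IsClassicalSolution f ν v)
    (hf : ContDiff ℝ (⊤ : ℕ∞) f) (ht : 0 < t) (x : ℝ) :
    HasDerivAt (viscousFlux f ν v t)
      (ν * spaceDeriv 2 v t x - deriv f (v t x) * spaceDeriv 1 v t x) x := by
  have hspace := hv.smooth.hasDerivAt_spaceDeriv 0 ht x
  rw [spaceDeriv_zero] at hspace
  exact ((hv.smooth.hasDerivAt_spaceDeriv 1 ht x).const_mul ν).sub
    ((hf.differentiable (by simp) (v t x)).hasDerivAt.comp x hspace)

theorem hasDerivAt_viscousFlux_space_space (hv : IsClassicalSolution f ν v)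
    (hf : ContDiff ℝ (⊤ : ℕ∞) f) (ht : 0 < t) (x : ℝ) :
    HasDerivAt (fun x => ν * spaceDeriv 2 v t x - deriv f (v t x) * spaceDeriv 1 v t x)
      (timeDeriv (spaceDeriv 1 v) t x) x := by
  have hspace := hv.smooth.hasDerivAt_spaceDeriv 0 ht x
  have hflux := (hasDerivAt_iteratedDeriv hf 1 (v t x)).comp x (by rwa [spaceDeriv_zero] at hspace)
  rw [iteratedDeriv_one] at hflux
  refine (((hv.smooth.hasDerivAt_spaceDeriv 2 ht x).const_mul ν).sub
    (hflux.mul (hv.smooth.hasDerivAt_spaceDeriv 1 ht x))).congr_deriv ?_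
  rw [hv.timeDeriv_spaceDeriv_one_eq hf ht]
  simp only [Function.comp_apply, Nat.reduceAdd]
  ring

theorem mul_viscousFlux_le (hv : IsClassicalSolution f ν v) (hf : ContDiff ℝ (⊤ : ℕ∞) f)
    (hν : 0 ≤ ν) (hper : ∀ t, Function.Periodic (v t) 1)
    (hcont : ContinuousOn (Function.uncurry (viscousFlux f ν v)) (Ici 0 ×ˢ univ)) {s K : ℝ}
    (hinit : ∀ x, s * viscousFlux f ν v 0 x ≤ K) (ht : 0 ≤ t) (x : ℝ) :
    s * viscousFlux f ν v t x ≤ K :=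
  le_of_parabolic_max_principle (φ := fun t x => s * viscousFlux f ν v t x) one_pos
    (continuousOn_const.mul (hcont.mono (prod_mono_left Icc_subset_Ici_self)))
    (fun t _ x => by
      simp only [viscousFlux, spaceDeriv, periodic_iteratedDeriv (hper t) _ x, hper t x])
    (fun _ ht x => (hv.hasDerivAt_viscousFlux_time hf ht.1 x).const_mul s)
    (fun _ ht x => (hv.hasDerivAt_viscousFlux_space hf ht.1 x).const_mul s)
    (fun _ ht x => (hv.hasDerivAt_viscousFlux_space_space hf ht.1 x).const_mul s)
    (fun t ht x _ hx hxx => by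
      have htransport : s * (ν * timeDeriv (spaceDeriv 1 v) t x
          - deriv f (v t x) * timeDeriv v t x)
          = ν * (s * timeDeriv (spaceDeriv 1 v) t x)
            - deriv f (v t x) * (s * (ν * spaceDeriv 2 v t x
              - deriv f (v t x) * spaceDeriv 1 v t x)) := by
        rw [← hv.pde t ht.1 x]
        ring
      rw [htransport, hx, mul_zero, sub_zero]
      exact mul_nonpos_of_nonneg_of_nonpos hν hxx)
    hinit t (right_mem_Icc.2 ht) x

theorem abs_viscousFlux_le (hv : IsClassicalSolution f ν v) (hf : ContDiff ℝ (⊤ : ℕ∞) f)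
    (hν : 0 ≤ ν) (hper : ∀ t, Function.Periodic (v t) 1)
    (hcont : ContinuousOn (Function.uncurry (viscousFlux f ν v)) (Ici 0 ×ˢ univ)) {K : ℝ}
    (hinit : ∀ x, |viscousFlux f ν v 0 x| ≤ K) (ht : 0 ≤ t) (x : ℝ) :
    |viscousFlux f ν v t x| ≤ K := by
  have hupper := hv.mul_viscousFlux_le hf hν hper hcont (s := 1)
    (fun x => (one_mul _).trans_le (abs_le.1 (hinit x)).2) ht x
  have hlower := hv.mul_viscousFlux_le hf hν hper hcont (s := -1)
    (fun x => by linarith [(abs_le.1 (hinit x)).1]) ht x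
  exact abs_le.2 ⟨by linarith, by linarith⟩

end IsClassicalSolution

end ViscousFlux

namespace IsBurgersSolution

variable {f : ℝ → ℝ} {σ ν : ℝ} {u : ℝ → ℝ → ℝ} {t : ℝ}

theorem isClassicalSolution (h : IsBurgersSolution f σ ν u) : IsClassicalSolution f ν u where
  smooth := h.hu.mono (prod_mono_left Ioi_subset_Ici_self)
  pde t ht x := by
    have hpde := h.hpde t ht x
    rw [← spaceDeriv_one_eq_deriv, ← spaceDeriv_succ_eq_deriv] at hpde
    simp only [timeDeriv]
    linarith

theorem contDiff_slice (h : IsBurgersSolution f σ ν u) (ht : 0 ≤ t) : ContDiff ℝ (⊤ : ℕ∞) (u t) :=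
  contDiffOn_univ.1 (ContDiffOn.comp (g := Function.uncurry u) (f := fun y : ℝ => (t, y)) h.hu
    (contDiff_const.prodMk contDiff_id).contDiffOn fun y _ => ⟨ht, mem_univ y⟩)

theorem continuous_iteratedDeriv (h : IsBurgersSolution f σ ν u) (ht : 0 ≤ t) (m : ℕ) :
    Continuous (iteratedDeriv m (u t)) :=
  (h.contDiff_slice ht).continuous_iteratedDeriv m (mod_cast le_top)

theorem integral_eq_zero (h : IsBurgersSolution f σ ν u) (ht : 0 ≤ t) :
    ∫ x in (0 : ℝ)..1, u t x = 0 := by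
  rw [intervalIntegral.integral_of_le zero_le_one, h.hmean t ht]

theorem continuousOn_spaceDeriv_one (h : IsBurgersSolution f σ ν u) :
    ContinuousOn (Function.uncurry (spaceDeriv 1 u)) (Ici 0 ×ˢ univ) := by
  have hfderiv := h.hu.continuousOn_fderivWithin
    ((uniqueDiffOn_Ici 0).prod uniqueDiffOn_univ) (by simp)
  refine (hfderiv.clm_apply (continuousOn_const (c := ((0 : ℝ), (1 : ℝ))))).congr ?_
  rintro ⟨t, x⟩ ht
  have hslice : HasDerivWithinAt (fun y : ℝ => (t, y)) (0, 1) univ x :=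
    ((hasDerivAt_const x t).prodMk (hasDerivAt_id x)).hasDerivWithinAt
  have hderiv := ((h.hu.differentiableOn (by simp) (t, x) ht).hasFDerivWithinAt
    ).comp_hasDerivWithinAt x hslice fun y _ => ⟨ht.1, mem_univ y⟩
  simp only [Function.uncurry_apply_pair, spaceDeriv_one_eq_deriv]
  exact (hasDerivWithinAt_univ.1 hderiv).deriv

theorem sobLp_zero_one_pos (h : IsBurgersSolution f σ ν u) : 0 < sobLp 0 1 (u 0) := by
  have hcont := (h.contDiff_slice le_rfl).continuous
  obtain ⟨x, hx⟩ := h.hinit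
  obtain ⟨y, hy, hxy⟩ :=
    (show Function.Periodic (u 0) 1 from h.hper 0).exists_mem_Ioc one_pos x 0
  rw [zero_add] at hy
  rw [sobLp_one_eq_integral (h.continuous_iteratedDeriv le_rfl 0), iteratedDeriv_zero]
  exact intervalIntegral.integral_pos one_pos hcont.abs.continuousOn (fun _ _ => abs_nonneg _)
    ⟨y, Ioc_subset_Icc_self hy, abs_pos.2 (hxy ▸ hx)⟩

theorem burgersD_pos (h : IsBurgersSolution f σ ν u) : 0 < burgersD u :=
  (inv_pos.2 h.sobLp_zero_one_pos).trans_le (le_max_left _ _)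

theorem inv_burgersD_le_sobLp (h : IsBurgersSolution f σ ν u) :
    (burgersD u)⁻¹ ≤ sobLp 0 1 (u 0) :=
  inv_le_of_inv_le₀ h.sobLp_zero_one_pos (le_max_left _ _)

theorem abs_spaceDeriv_one_init_le (h : IsBurgersSolution f σ ν u) (x : ℝ) :
    |spaceDeriv 1 u 0 x| ≤ burgersD u :=
  (abs_iteratedDeriv_le_sobLp_top (h.continuous_iteratedDeriv le_rfl 1) (h.hper 0) x).trans
    (le_max_right _ _)

/- Along a solution of `u_t + f'(u) u_x = 0` the slope satisfies the Riccati inequality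
`w' ≤ -σ w²`, whose solution starting at `D` is `D / (1 + σ D t)`. -/
theorem oleinik_estimate (h : IsBurgersSolution f σ ν u) (ht : 0 ≤ t) (x : ℝ) :
    (1 + σ * burgersD u * t) * spaceDeriv 1 u t x ≤ burgersD u := by
  have hv := h.isClassicalSolution
  have hD := h.burgersD_pos
  have hσ := h.hσ
  set D := burgersD u
  refine le_of_parabolic_max_principle (φ := fun t x => (1 + σ * D * t) * spaceDeriv 1 u t x)
    (φt := fun t x => σ * D * spaceDeriv 1 u t x
      + (1 + σ * D * t) * timeDeriv (spaceDeriv 1 u) t x) one_pos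
    ((Continuous.continuousOn (by fun_prop)).mul
      (h.continuousOn_spaceDeriv_one.mono (prod_mono_left Icc_subset_Ici_self)))
    (fun t _ x => by simp only [spaceDeriv, periodic_iteratedDeriv (h.hper t) 1 x])
    (fun t ht x => ?_)
    (fun t ht x => (hv.smooth.hasDerivAt_spaceDeriv 1 ht.1 x).const_mul (1 + σ * D * t))
    (fun t ht x => (hv.smooth.hasDerivAt_spaceDeriv 2 ht.1 x).const_mul (1 + σ * D * t))
    (fun t ht x hφ hφx hφxx => ?_)
    (fun x => by simpa using (abs_le.1 (h.abs_spaceDeriv_one_init_le x)).2)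
    t (right_mem_Icc.2 ht) x
  · exact ((((hasDerivAt_id t).const_mul (σ * D)).const_add 1).mul
      ((hv.smooth.spaceDeriv 1).hasDerivAt_timeDeriv ht.1 x)).congr_deriv (by simp)
  · have hs : 0 < 1 + σ * D * t := by have := ht.1; positivity
    have hw : 0 < spaceDeriv 1 u t x := pos_of_mul_pos_right (hD.trans hφ) hs.le
    have hw' : spaceDeriv 2 u t x = 0 := (mul_eq_zero.1 hφx).resolve_left hs.ne'
    simp only [hv.timeDeriv_spaceDeriv_one_eq h.hf ht.1, hw', mul_zero, sub_zero]
    calc σ * D * spaceDeriv 1 u t x + (1 + σ * D * t)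
          * (ν * spaceDeriv 3 u t x - iteratedDeriv 2 f (u t x) * spaceDeriv 1 u t x ^ 2)
        = σ * D * spaceDeriv 1 u t x + ν * ((1 + σ * D * t) * spaceDeriv 3 u t x)
          - iteratedDeriv 2 f (u t x) * ((1 + σ * D * t) * spaceDeriv 1 u t x ^ 2) := by ring
      _ ≤ σ * D * spaceDeriv 1 u t x + ν * 0
          - σ * ((1 + σ * D * t) * spaceDeriv 1 u t x ^ 2) := by
        gcongr
        exacts [h.hν.le, h.hconv _]
      _ = σ * spaceDeriv 1 u t x * (D - (1 + σ * D * t) * spaceDeriv 1 u t x) := by ring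
      _ ≤ 0 := mul_nonpos_of_nonneg_of_nonpos (by positivity) (by linarith)

theorem spaceDeriv_one_le (h : IsBurgersSolution f σ ν u) (ht : 0 ≤ t) (x : ℝ) :
    spaceDeriv 1 u t x ≤ burgersD u := by
  have hσD := mul_nonneg (mul_nonneg h.hσ.le h.burgersD_pos.le) ht
  by_contra! hlt
  nlinarith [h.oleinik_estimate ht x, h.burgersD_pos, mul_nonneg hσD (h.burgersD_pos.trans hlt).le]

theorem mul_spaceDeriv_one_le_one (h : IsBurgersSolution f σ ν u) (ht : 0 ≤ t) (x : ℝ) :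
    σ * t * spaceDeriv 1 u t x ≤ 1 := by
  have hD := h.burgersD_pos
  have hσt := mul_nonneg h.hσ.le ht
  rcases le_total (spaceDeriv 1 u t x) 0 with hw | hw
  · exact (mul_nonpos_of_nonneg_of_nonpos hσt hw).trans zero_le_one
  · refine le_of_mul_le_mul_left ?_ hD
    linarith [h.oleinik_estimate ht x]

theorem abs_le_of_spaceDeriv_one_le (h : IsBurgersSolution f σ ν u) (ht : 0 ≤ t) {K : ℝ}
    (hK : ∀ x, spaceDeriv 1 u t x ≤ K) (x : ℝ) : |u t x| ≤ K :=
  abs_le_of_deriv_le_of_integral_eq_zero ((h.contDiff_slice ht).differentiable (by simp))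
    (h.hper t) (h.integral_eq_zero ht) (fun x => spaceDeriv_one_eq_deriv u t ▸ hK x) x

theorem abs_le_burgersD (h : IsBurgersSolution f σ ν u) (ht : 0 ≤ t) (x : ℝ) :
    |u t x| ≤ burgersD u :=
  h.abs_le_of_spaceDeriv_one_le ht (h.spaceDeriv_one_le ht) x

theorem sobLp_one_one_le (h : IsBurgersSolution f σ ν u) (ht : 0 ≤ t) :
    sobLp 1 1 (u t) ≤ 2 * burgersD u := by
  rw [sobLp_one_eq_integral (h.continuous_iteratedDeriv ht 1), iteratedDeriv_one]
  exact integral_abs_deriv_le_two_mul ((h.contDiff_slice ht).of_le (by simp)) (h.hper t)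
    fun x => spaceDeriv_one_eq_deriv u t ▸ h.spaceDeriv_one_le ht x

theorem abs_viscousFlux_le (h : IsBurgersSolution f σ ν u) {K : ℝ}
    (hK : ∀ x, |viscousFlux f ν u 0 x| ≤ K) (ht : 0 ≤ t) (x : ℝ) :
    |viscousFlux f ν u t x| ≤ K :=
  h.isClassicalSolution.abs_viscousFlux_le h.hf h.hν.le h.hper
    ((continuousOn_const.mul h.continuousOn_spaceDeriv_one).sub
      (h.hf.continuous.comp_continuousOn h.hu.continuousOn)) hK ht x

end IsBurgersSolution

/-- A solution of viscosity at most `1` with initial size `burgersD u = D`: the class over which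
all the estimates below are uniform. -/
structure IsBurgersSolutionOfSize (f : ℝ → ℝ) (σ ν D : ℝ) (u : ℝ → ℝ → ℝ) : Prop
    extends IsBurgersSolution f σ ν u where
  visc_le_one : ν ≤ 1
  burgersD_eq : burgersD u = D

section Rescaling

variable {f : ℝ → ℝ} {D : ℝ}

theorem exists_mul_abs_spaceDeriv_one_le (hf : Continuous f) (D : ℝ) : ∃ C, ∀ σ ν u,
    IsBurgersSolutionOfSize f σ ν D u → ∀ t ≥ 0, ∀ x, ν * |spaceDeriv 1 u t x| ≤ C := by
  obtain ⟨M, -, hM⟩ := exists_abs_le_of_continuous hf D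
  refine ⟨D + 2 * M, fun σ ν u h t ht x => ?_⟩
  have hD := h.burgersD_eq
  have hfu {s : ℝ} (hs : 0 ≤ s) (y : ℝ) : |f (u s y)| ≤ M := hM _ (hD ▸ h.abs_le_burgersD hs y)
  have hinit (y : ℝ) : |viscousFlux f ν u 0 y| ≤ D + M := by
    calc |viscousFlux f ν u 0 y| ≤ |ν * spaceDeriv 1 u 0 y| + |f (u 0 y)| := abs_sub _ _
      _ ≤ 1 * D + M := by
        rw [abs_mul, abs_of_pos h.hν]
        exact add_le_add (mul_le_mul h.visc_le_one (hD ▸ h.abs_spaceDeriv_one_init_le y)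
          (abs_nonneg _) zero_le_one) (hfu le_rfl y)
      _ = D + M := by rw [one_mul]
  calc ν * |spaceDeriv 1 u t x| = |viscousFlux f ν u t x + f (u t x)| := by
        rw [viscousFlux, sub_add_cancel, abs_mul, abs_of_pos h.hν]
    _ ≤ |viscousFlux f ν u t x| + |f (u t x)| := abs_add_le _ _
    _ ≤ D + 2 * M := by linarith [h.abs_viscousFlux_le hinit ht x, hfu ht x]

theorem iteratedDeriv_comp_mul_left {g : ℝ → ℝ} (hg : ContDiff ℝ (⊤ : ℕ∞) g) (c : ℝ) (j : ℕ)
    (y : ℝ) : iteratedDeriv j (fun y => g (c * y)) y = c ^ j * iteratedDeriv j g (c * y) :=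
  congrFun (iteratedDeriv_comp_const_mul (hg.of_le (mod_cast le_top)) c) y

theorem IsBurgersSolutionOfSize.isLipschitzUnitSolution_rescale {σ ν C : ℝ} {u : ℝ → ℝ → ℝ}
    (h : IsBurgersSolutionOfSize f σ ν D u)
    (hC : ∀ t ≥ 0, ∀ x, ν * |spaceDeriv 1 u t x| ≤ C) :
    IsLipschitzUnitSolution f ν⁻¹ D C fun s y => u (ν * s) (ν * y) := by
  have hν := h.hν
  have hspace {s : ℝ} (hs : 0 < s) (j : ℕ) (y : ℝ) :
      spaceDeriv j (fun s y => u (ν * s) (ν * y)) s y = ν ^ j * spaceDeriv j u (ν * s) (ν * y) :=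
    iteratedDeriv_comp_mul_left (h.contDiff_slice (mul_pos hν hs).le) ν j y
  refine ⟨⟨?_, ?_⟩, inv_pos.2 hν, ?_, ?_, ?_⟩
  · exact ContDiffOn.comp (g := Function.uncurry u) (f := fun z : ℝ × ℝ => (ν * z.1, ν * z.2))
      h.isClassicalSolution.smooth (ContDiff.contDiffOn (by fun_prop))
      fun z hz => ⟨mul_pos hν hz.1, mem_univ _⟩
  · intro s hs y
    have htime : timeDeriv (fun s y => u (ν * s) (ν * y)) s y
        = ν * timeDeriv u (ν * s) (ν * y) := by
      simpa [timeDeriv] using deriv_comp_mul_left ν (fun s => u s (ν * y)) s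
    rw [htime, hspace hs, hspace hs]
    linear_combination ν * h.isClassicalSolution.pde (ν * s) (mul_pos hν hs) (ν * y)
  · intro s y
    simp only [mul_add, mul_inv_cancel₀ hν.ne', h.hper]
  · exact fun s hs y => h.burgersD_eq ▸ h.abs_le_burgersD (mul_pos hν hs).le _
  · intro s hs y
    rw [hspace hs, pow_one, abs_mul, abs_of_pos hν]
    exact hC _ (mul_pos hν hs).le _

theorem exists_abs_iteratedDeriv_stretch_le (hf : ContDiff ℝ (⊤ : ℕ∞) f) (D : ℝ) {τ : ℝ}
    (hτ : 0 < τ) : ∃ K : ℕ → ℝ, ∀ σ ν u, IsBurgersSolutionOfSize f σ ν D u →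
      ∀ t ≥ τ, ∀ j y, |iteratedDeriv j (fun y => u t (ν * y)) y| ≤ K j := by
  obtain ⟨C, hC⟩ := exists_mul_abs_spaceDeriv_one_le hf.continuous D
  choose K _ hK using fun j =>
    exists_abs_spaceDeriv_le_of_isLipschitzUnitSolution hf D C j τ hτ
  refine ⟨K, fun σ ν u h t ht j y => ?_⟩
  have hbound := hK j _ _ (h.isLipschitzUnitSolution_rescale (hC σ ν u h)) (t / ν)
    (ht.le.trans (le_div_self (hτ.trans_le ht).le h.hν h.visc_le_one)) y j (Nat.le_succ j)
  simpa only [spaceDeriv, mul_div_cancel₀ t h.hν.ne'] using hbound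

end Rescaling

/-! ### Interpolation between the derivatives -/

section Interpolation

/-- The function `g` is smooth and its `j`-th derivative is bounded by `K j` on `s`. -/
structure DerivBoundedOn (K : ℕ → ℝ) (s : Set ℝ) (g : ℝ → ℝ) : Prop where
  contDiff : ContDiff ℝ (⊤ : ℕ∞) g
  abs_le : ∀ j, ∀ y ∈ s, |iteratedDeriv j g y| ≤ K j

theorem DerivBoundedOn.deriv {K : ℕ → ℝ} {s : Set ℝ} {g : ℝ → ℝ} (h : DerivBoundedOn K s g) :
    DerivBoundedOn (fun j => K (j + 1)) s (deriv g) :=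
  ⟨(contDiff_infty_iff_deriv.1 h.contDiff).2, fun j y hy => by
    simpa only [← iteratedDeriv_succ'] using h.abs_le (j + 1) y hy⟩

/-- On unit intervals, and among the functions whose derivatives obey prescribed bounds, the `j`-th
derivative is controlled by the power `θ` of the supremum of the function. -/
def DerivInterpolates (j : ℕ) (θ : ℝ) : Prop :=
  ∀ K : ℕ → ℝ, ∃ C, 0 ≤ C ∧ ∀ g x, DerivBoundedOn K (Icc x (x + 1)) g →
    ∀ a, (∀ y ∈ Icc x (x + 1), |g y| ≤ a) → ∀ y ∈ Icc x (x + 1), |iteratedDeriv j g y| ≤ C * a ^ θ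

theorem abs_deriv_le_of_abs_le_of_abs_deriv_deriv_le {g : ℝ → ℝ} (hg : Differentiable ℝ g)
    (hg' : Differentiable ℝ (deriv g)) {c d a b : ℝ} (hcd : c < d)
    (ha : ∀ y ∈ Icc c d, |g y| ≤ a) (hb : ∀ y ∈ Icc c d, |deriv (deriv g) y| ≤ b) {y : ℝ}
    (hy : y ∈ Icc c d) : |deriv g y| ≤ 2 * a / (d - c) + (d - c) * b := by
  have hdc : 0 < d - c := sub_pos.2 hcd
  obtain ⟨ξ, hξ, hslope⟩ := exists_deriv_eq_slope g hcd hg.continuous.continuousOn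
    hg.differentiableOn
  have hderiv : |deriv g ξ| ≤ 2 * a / (d - c) := by
    rw [hslope, abs_div, abs_of_pos hdc]
    gcongr
    linarith [abs_sub (g d) (g c), ha c (left_mem_Icc.2 hcd.le), ha d (right_mem_Icc.2 hcd.le)]
  have hvar : |deriv g y - deriv g ξ| ≤ b * |y - ξ| :=
    Convex.norm_image_sub_le_of_norm_deriv_le (fun z _ => hg' z) hb (convex_Icc c d)
      (Ioo_subset_Icc_self hξ) hy
  have hdist : |y - ξ| ≤ d - c := by
    rw [abs_le]
    constructor <;> linarith [hξ.1, hξ.2, hy.1, hy.2]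
  have hb₀ : 0 ≤ b := (abs_nonneg _).trans (hb y hy)
  linarith [abs_sub_abs_le_abs_sub (deriv g y) (deriv g ξ), mul_le_mul_of_nonneg_left hdist hb₀]

theorem abs_deriv_le_of_mem_Icc_of_le_half {g : ℝ → ℝ} (hg : Differentiable ℝ g)
    (hg' : Differentiable ℝ (deriv g)) {x a b h : ℝ} (ha : ∀ y ∈ Icc x (x + 1), |g y| ≤ a)
    (hb : ∀ y ∈ Icc x (x + 1), |deriv (deriv g) y| ≤ b) (hh : 0 < h) (hh' : h ≤ 1 / 2) {y : ℝ}
    (hy : y ∈ Icc x (x + 1)) : |deriv g y| ≤ 2 * a / h + h * b := by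
  suffices hsub : ∃ c, x ≤ c ∧ c + h ≤ x + 1 ∧ y ∈ Icc c (c + h) by
    obtain ⟨c, hc, hc', hyc⟩ := hsub
    have hIcc : Icc c (c + h) ⊆ Icc x (x + 1) := Icc_subset_Icc hc hc'
    simpa only [add_sub_cancel_left] using abs_deriv_le_of_abs_le_of_abs_deriv_deriv_le hg hg'
      (lt_add_of_pos_right c hh) (fun z hz => ha z (hIcc hz)) (fun z hz => hb z (hIcc hz)) hyc
  rcases le_total (y + h) (x + 1) with hyh | hyh
  · exact ⟨y, hy.1, hyh, le_rfl, by linarith⟩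
  · exact ⟨y - h, by linarith, by linarith [hy.2], by linarith, by linarith⟩

/- Choose `h` proportional to `A ^ (1 - θ)`, so that the term `h * (C * A ^ θ)` is absorbed. -/
theorem exists_le_mul_rpow_of_forall_le_div_add {θ C M : ℝ} (hθ₀ : 0 ≤ θ) (hθ₁ : θ < 1)
    (hC : 0 ≤ C) (hM : 0 ≤ M) : ∃ C', 0 ≤ C' ∧ ∀ a A, 0 ≤ a → 0 ≤ A → A ≤ M →
      (∀ h, 0 < h → h ≤ 1 / 2 → A ≤ 2 * a / h + h * (C * A ^ θ)) →
        A ≤ C' * a ^ (1 / (2 - θ)) := by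
  have hθ₂ : 0 < 2 - θ := by linarith
  set c := 1 / (2 * (C + 1) * (1 + M)) with hc
  have hc₀ : 0 < c := by positivity
  have hcM : c * (1 + M) = 1 / (2 * (C + 1)) := by rw [hc]; field_simp
  have hcC : c * C ≤ 1 / 2 := by
    rw [hc, div_mul_eq_mul_div, div_le_div_iff₀ (by positivity) two_pos]
    nlinarith [mul_nonneg hC hM]
  refine ⟨(4 / c) ^ (1 / (2 - θ)), by positivity, fun a A ha hA hAM hh => ?_⟩
  rcases hA.eq_or_lt with rfl | hA₀
  · positivity
  set B := A ^ (1 - θ) with hB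
  have hB₀ : 0 < B := Real.rpow_pos_of_pos hA₀ _
  have hBM : B ≤ 1 + M :=
    calc B ≤ (1 + M) ^ (1 - θ) := Real.rpow_le_rpow hA (by linarith) (by linarith)
      _ ≤ (1 + M) ^ (1 : ℝ) := Real.rpow_le_rpow_of_exponent_le (by linarith) (by linarith)
      _ = 1 + M := Real.rpow_one _
  have hBA : B * A ^ θ = A := by rw [hB, ← Real.rpow_add hA₀, sub_add_cancel, Real.rpow_one]
  have hcB : c * B ≤ 1 / 2 :=
    calc c * B ≤ 1 / (2 * (C + 1)) := hcM ▸ mul_le_mul_of_nonneg_left hBM hc₀.le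
      _ ≤ 1 / 2 := one_div_le_one_div_of_le two_pos (by linarith)
  have habsorb : A / 2 ≤ 2 * a / (c * B) := by
    have hlast : c * B * (C * A ^ θ) = c * C * A := by rw [← congrArg (c * C * ·) hBA]; ring
    nlinarith [hh (c * B) (mul_pos hc₀ hB₀) hcB]
  have hpow : A ^ (2 - θ) ≤ 4 / c * a := by
    rw [le_div_iff₀ (by positivity)] at habsorb
    rw [show 2 - θ = 1 + (1 - θ) by ring, Real.rpow_add hA₀, Real.rpow_one, ← hB,
      div_mul_eq_mul_div, le_div_iff₀ hc₀]
    linarith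
  calc A = (A ^ (2 - θ)) ^ (1 / (2 - θ)) := by
        rw [← Real.rpow_mul hA, mul_one_div_cancel hθ₂.ne', Real.rpow_one]
    _ ≤ (4 / c * a) ^ (1 / (2 - θ)) := Real.rpow_le_rpow (by positivity) hpow (by positivity)
    _ = (4 / c) ^ (1 / (2 - θ)) * a ^ (1 / (2 - θ)) := Real.mul_rpow (by positivity) ha

theorem derivInterpolates_one_zero : DerivInterpolates 1 0 := fun K =>
  ⟨|K 1|, abs_nonneg _, fun g x hg a _ y hy => by
    simpa using (hg.abs_le 1 y hy).trans (le_abs_self _)⟩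

theorem DerivInterpolates.one_improve {θ : ℝ} (h : DerivInterpolates 1 θ) (hθ₀ : 0 ≤ θ)
    (hθ₁ : θ < 1) : DerivInterpolates 1 (1 / (2 - θ)) := by
  intro K
  obtain ⟨C₁, hC₁, hderiv⟩ := h fun j => K (j + 1)
  obtain ⟨C, hC, hreal⟩ := exists_le_mul_rpow_of_forall_le_div_add hθ₀ hθ₁ hC₁ (abs_nonneg (K 1))
  refine ⟨C, hC, fun g x hg a ha y hy => ?_⟩
  have hg' := hg.deriv.contDiff
  obtain ⟨z, hz, hmax⟩ := isCompact_Icc.exists_isMaxOn ⟨y, hy⟩ hg'.continuous.abs.continuousOn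
  rw [iteratedDeriv_one]
  refine (isMaxOn_iff.1 hmax y hy).trans
    (hreal a |deriv g z| ((abs_nonneg _).trans (ha y hy)) (abs_nonneg _) ?_ fun r hr hr' => ?_)
  · simpa only [iteratedDeriv_one] using (hg.abs_le 1 z hz).trans (le_abs_self _)
  · refine abs_deriv_le_of_mem_Icc_of_le_half (hg.contDiff.differentiable (by simp))
      (hg'.differentiable (by simp)) ha (fun w hw => ?_) hr hr' hz
    simpa only [iteratedDeriv_one] using
      hderiv (deriv g) x hg.deriv |deriv g z| (isMaxOn_iff.1 hmax) w hw

theorem derivInterpolates_one_div_succ (n : ℕ) : DerivInterpolates 1 (n / (n + 1)) := by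
  induction n with
  | zero => simpa using derivInterpolates_one_zero
  | succ n ih =>
    have hn : (0 : ℝ) < n + 1 := by positivity
    have hexp : (2 : ℝ) - n / (n + 1) = ((n + 1 : ℕ) + 1) / (n + 1) := by
      push_cast
      field_simp
      ring
    simpa only [hexp, one_div_div, Nat.cast_succ] using
      ih.one_improve (by positivity) ((div_lt_one hn).2 (lt_add_one _))

theorem DerivInterpolates.mono {j : ℕ} {θ η : ℝ} (h : DerivInterpolates j η) (hθ : 0 ≤ θ)
    (hθη : θ ≤ η) : DerivInterpolates j θ := by
  intro K
  obtain ⟨C, hC, hη⟩ := h K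
  refine ⟨C * |K 0| ^ (η - θ), by positivity, fun g x hg a ha y hy => ?_⟩
  have ha' : ∀ z ∈ Icc x (x + 1), |g z| ≤ min a |K 0| := fun z hz =>
    le_min (ha z hz) ((hg.abs_le 0 z hz).trans (le_abs_self _))
  have hmin : 0 ≤ min a |K 0| := (abs_nonneg _).trans (ha' y hy)
  calc |iteratedDeriv j g y| ≤ C * min a |K 0| ^ η := hη g x hg _ ha' y hy
    _ = C * (min a |K 0| ^ (η - θ) * min a |K 0| ^ θ) := by
      rw [← Real.rpow_add_of_nonneg hmin (sub_nonneg.2 hθη) hθ, sub_add_cancel]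
    _ ≤ C * (|K 0| ^ (η - θ) * a ^ θ) := by
      gcongr
      exacts [min_le_right _ _, min_le_left _ _]
    _ = C * |K 0| ^ (η - θ) * a ^ θ := by ring

theorem DerivInterpolates.comp {i : ℕ} {θ η : ℝ} (hi : DerivInterpolates i η)
    (h : DerivInterpolates 1 θ) : DerivInterpolates (i + 1) (θ * η) := by
  intro K
  obtain ⟨C₁, hC₁, h₁⟩ := h K
  obtain ⟨C₂, hC₂, h₂⟩ := hi fun j => K (j + 1)
  refine ⟨C₂ * C₁ ^ η, by positivity, fun g x hg a ha y hy => ?_⟩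
  have ha₀ : 0 ≤ a := (abs_nonneg _).trans (ha y hy)
  have hderiv := h₂ (deriv g) x hg.deriv (C₁ * a ^ θ)
    (by simpa only [iteratedDeriv_one] using h₁ g x hg a ha) y hy
  rwa [← iteratedDeriv_succ', Real.mul_rpow hC₁ (by positivity), ← Real.rpow_mul ha₀,
    ← mul_assoc] at hderiv

theorem derivInterpolates_succ (j : ℕ) :
    ∀ {θ : ℝ}, 0 < θ → θ < 1 → DerivInterpolates (j + 1) θ := by
  have hone {θ : ℝ} (hθ₀ : 0 < θ) (hθ₁ : θ < 1) : DerivInterpolates 1 θ := by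
    obtain ⟨n, hn⟩ := exists_nat_gt (θ / (1 - θ))
    refine (derivInterpolates_one_div_succ n).mono hθ₀.le ?_
    rw [div_lt_iff₀ (sub_pos.2 hθ₁)] at hn
    rw [le_div_iff₀ (by positivity)]
    linarith
  induction j with
  | zero => exact hone
  | succ j ih =>
    intro θ hθ₀ hθ₁
    have hsqrt₀ : 0 < √θ := Real.sqrt_pos.2 hθ₀
    have hsqrt₁ : √θ < 1 := by simpa using Real.sqrt_lt_sqrt hθ₀.le hθ₁
    simpa only [Real.mul_self_sqrt hθ₀.le] using (ih hsqrt₀ hsqrt₁).comp (hone hsqrt₀ hsqrt₁)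

theorem exists_abs_iteratedDeriv_succ_le_mul_integral_rpow (j : ℕ) {θ : ℝ} (hθ₀ : 0 < θ)
    (hθ₁ : θ < 1) (K : ℕ → ℝ) : ∃ C, 0 ≤ C ∧ ∀ g, DerivBoundedOn K univ g → ∀ x,
      |iteratedDeriv (j + 1) g x| ≤ C * (∫ s in x..(x + 1), |deriv g s|) ^ θ := by
  obtain ⟨C, hC, hinterp⟩ := derivInterpolates_succ j hθ₀ hθ₁ fun i => 2 * K i
  refine ⟨C, hC, fun g hg x => ?_⟩
  have hK (i : ℕ) (y : ℝ) : |iteratedDeriv i g y| ≤ K i := hg.abs_le i y (mem_univ y)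
  have hsucc (i : ℕ) (y : ℝ) :
      iteratedDeriv (i + 1) (fun z => g z - g x) y = iteratedDeriv (i + 1) g y := by
    simp only [iteratedDeriv_succ', deriv_sub_const_fun]
  have hcont : Continuous (deriv g) := hg.deriv.contDiff.continuous
  rw [← hsucc]
  refine hinterp (fun z => g z - g x) x ⟨hg.contDiff.sub contDiff_const, fun i y _ => ?_⟩ _
    (fun y hy => ?_) x (left_mem_Icc.2 (by linarith))
  · cases i with
    | zero =>
      have hg₀ : ∀ z, |g z| ≤ K 0 := by simpa only [iteratedDeriv_zero] using hK 0
      rw [iteratedDeriv_zero]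
      linarith [abs_sub (g y) (g x), hg₀ x, hg₀ y]
    | succ i =>
      rw [hsucc]
      linarith [hK (i + 1) y, abs_nonneg (iteratedDeriv (i + 1) g y)]
  · rw [← intervalIntegral.integral_deriv_eq_sub
      (fun z _ => hg.contDiff.differentiable (by simp) z) (hcont.intervalIntegrable x y)]
    exact (intervalIntegral.abs_integral_le_integral_abs hy.1).trans
      (intervalIntegral.integral_mono_interval le_rfl hy.1 hy.2
        (ae_of_all _ fun _ => abs_nonneg _) (hcont.abs.intervalIntegrable _ _))

end Interpolation

/-! ### Upper bounds -/

section UpperBound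

/-- The exponent `γ = max(0, m - 1/p)`. -/
noncomputable def scalingExponent (m : ℕ) (p : ℝ≥0∞) : ℝ :=
  max 0 ((m : ℝ) - (1 / p).toReal)

theorem scalingExponent_zero (p : ℝ≥0∞) : scalingExponent 0 p = 0 :=
  max_eq_left (by simp)

theorem scalingExponent_of_one_le {m : ℕ} {p : ℝ≥0∞} (hm : 1 ≤ m) (hp : 1 ≤ p) :
    scalingExponent m p = m - p.toReal⁻¹ := by
  have hinv : p⁻¹.toReal ≤ 1 :=
    ENNReal.toReal_le_of_le_ofReal zero_le_one (by simpa using ENNReal.inv_le_one.2 hp)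
  have hm' : (1 : ℝ) ≤ m := mod_cast hm
  rw [ENNReal.toReal_inv] at hinv
  rw [scalingExponent, one_div, ENNReal.toReal_inv, max_eq_right (by linarith)]

theorem integral_integral_comp_add_mul {W : ℝ → ℝ} (hW : Continuous W)
    (hper : Function.Periodic W 1) (ν : ℝ) :
    ∫ x in (0 : ℝ)..1, ∫ s in (0 : ℝ)..1, W (x + ν * s) = ∫ x in (0 : ℝ)..1, W x := by
  have hshift (s : ℝ) : ∫ x in (0 : ℝ)..1, W (x + ν * s) = ∫ x in (0 : ℝ)..1, W x := by
    rw [intervalIntegral.integral_comp_add_right, zero_add, add_comm,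
      hper.intervalIntegral_add_eq (ν * s) 0, zero_add]
  have hcont : Continuous (Function.uncurry fun x s => W (x + ν * s)) := by
    unfold Function.uncurry
    fun_prop
  rw [intervalIntegral_intervalIntegral_swap ((hcont.continuousOn.integrableOn_compact
    (isCompact_uIcc.prod isCompact_uIcc)).mono_set (prod_mono uIoc_subset_uIcc uIoc_subset_uIcc))]
  simp only [hshift, intervalIntegral.integral_const, sub_zero, one_smul]

theorem integral_abs_deriv_stretch (v : ℝ → ℝ) {ν : ℝ} (hν : 0 < ν) (x : ℝ) :
    ∫ s in (x / ν)..(x / ν + 1), |deriv (fun y => v (ν * y)) s|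
      = ν * ∫ s in (0 : ℝ)..1, |deriv v (x + ν * s)| := by
  have hshift := intervalIntegral.integral_comp_add_right (a := 0) (b := 1)
    (fun s => |deriv (fun y => v (ν * y)) s|) (x / ν)
  rw [zero_add, add_comm 1] at hshift
  rw [← hshift, ← intervalIntegral.integral_const_mul]
  refine intervalIntegral.integral_congr fun s _ => ?_
  simp only [deriv_comp_mul_left, smul_eq_mul, abs_mul, abs_of_pos hν, mul_add,
    mul_div_cancel₀ x hν.ne', add_comm (ν * s)]

/- Raised to the power `p`, the hypothesis bounds `|v^{(m)}(x)|^p` by the average of `|v'|` over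
`[x, x + ν]`, and averaging over windows preserves the integral over a period. -/
theorem sobLp_le_of_abs_iteratedDeriv_stretch_le {m : ℕ} {v : ℝ → ℝ}
    (hv : ContDiff ℝ (⊤ : ℕ∞) v) (hper : Function.Periodic v 1) {p : ℝ≥0∞} (hp₀ : p ≠ 0)
    (hp : p ≠ ⊤) {ν C : ℝ} (hν : 0 < ν) (hC : 0 ≤ C)
    (hstretch : ∀ y, |iteratedDeriv m (fun y => v (ν * y)) y|
      ≤ C * (∫ s in y..(y + 1), |deriv (fun y => v (ν * y)) s|) ^ p.toReal⁻¹) :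
    sobLp m p v ≤ C * sobLp 1 1 v ^ p.toReal⁻¹ * ν ^ (-(m - p.toReal⁻¹)) := by
  have hq : 0 < p.toReal := ENNReal.toReal_pos hp₀ hp
  have hvm : Continuous (iteratedDeriv m v) := hv.continuous_iteratedDeriv m (mod_cast le_top)
  have hdv : Continuous (deriv v) := hv.continuous_deriv (by simp)
  have hone : sobLp 1 1 v = ∫ x in (0 : ℝ)..1, |deriv v x| := by
    rw [sobLp_one_eq_integral (by rwa [iteratedDeriv_one]), iteratedDeriv_one]
  set A : ℝ → ℝ := fun x => ∫ s in (0 : ℝ)..1, |deriv v (x + ν * s)|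
  have hA₀ (x : ℝ) : 0 ≤ A x :=
    intervalIntegral.integral_nonneg zero_le_one fun _ _ => abs_nonneg _
  have hAcont : Continuous A :=
    intervalIntegral.continuous_parametric_intervalIntegral_of_continuous'
      (by unfold Function.uncurry; fun_prop) 0 1
  have hAint : ∫ x in (0 : ℝ)..1, A x = sobLp 1 1 v := by
    refine (integral_integral_comp_add_mul hdv.abs (fun x => ?_) ν).trans hone.symm
    simp only [← iteratedDeriv_one, periodic_iteratedDeriv hper 1 x]
  have hpoint (x : ℝ) : |iteratedDeriv m v x| ^ p.toReal ≤ (C / ν ^ m) ^ p.toReal * ν * A x := by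
    have hx := hstretch (x / ν)
    rw [iteratedDeriv_comp_mul_left hv, integral_abs_deriv_stretch v hν,
      mul_div_cancel₀ _ hν.ne', abs_mul, abs_of_pos (pow_pos hν m), mul_comm,
      ← le_div_iff₀ (pow_pos hν m), mul_div_right_comm] at hx
    calc |iteratedDeriv m v x| ^ p.toReal
        ≤ (C / ν ^ m * (ν * A x) ^ p.toReal⁻¹) ^ p.toReal :=
          Real.rpow_le_rpow (abs_nonneg _) hx hq.le
      _ = (C / ν ^ m) ^ p.toReal * ν * A x := by
          have hνA : 0 ≤ ν * A x := mul_nonneg hν.le (hA₀ x)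
          rw [Real.mul_rpow (by positivity) (by positivity), Real.rpow_inv_rpow hνA hq.ne',
            mul_assoc]
  rw [sobLp_eq_integral_rpow hvm hp₀ hp]
  calc (∫ x in (0 : ℝ)..1, |iteratedDeriv m v x| ^ p.toReal) ^ p.toReal⁻¹
      ≤ (∫ x in (0 : ℝ)..1, (C / ν ^ m) ^ p.toReal * ν * A x) ^ p.toReal⁻¹ := by
        refine Real.rpow_le_rpow (intervalIntegral.integral_nonneg zero_le_one fun _ _ =>
          by positivity) ?_ (by positivity)
        refine intervalIntegral.integral_mono_on zero_le_one ?_ ?_ fun x _ => hpoint x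
        · exact (hvm.abs.rpow_const fun _ => Or.inr hq.le).intervalIntegrable _ _
        · exact (hAcont.const_mul _).intervalIntegrable _ _
    _ = ((C / ν ^ m) ^ p.toReal * ν * sobLp 1 1 v) ^ p.toReal⁻¹ := by
        rw [intervalIntegral.integral_const_mul, hAint]
    _ = C * sobLp 1 1 v ^ p.toReal⁻¹ * ν ^ (-(m - p.toReal⁻¹)) := by
        rw [Real.mul_rpow (by positivity) (sobLp_nonneg 1 1 v), Real.mul_rpow (by positivity) hν.le,
          Real.rpow_rpow_inv (by positivity) hq.ne', neg_sub, Real.rpow_sub hν, Real.rpow_natCast]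
        ring

variable {f : ℝ → ℝ}

theorem IsBurgersSolution.sobLp_zero_le {σ ν : ℝ} {u : ℝ → ℝ → ℝ} (h : IsBurgersSolution f σ ν u)
    {t : ℝ} (ht : 0 ≤ t) (p : ℝ≥0∞) : sobLp 0 p (u t) ≤ burgersD u :=
  sobLp_le_of_forall_abs_le h.burgersD_pos.le fun x _ => by
    simpa only [iteratedDeriv_zero] using h.abs_le_burgersD ht x

theorem exists_sobLp_top_le (hf : ContDiff ℝ (⊤ : ℕ∞) f) (D : ℝ) {τ : ℝ} (hτ : 0 < τ) (m : ℕ) :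
    ∃ C, ∀ σ ν u, IsBurgersSolutionOfSize f σ ν D u → ∀ t ≥ τ,
      sobLp m ⊤ (u t) ≤ C * ν ^ (-(m : ℝ)) := by
  obtain ⟨K, hK⟩ := exists_abs_iteratedDeriv_stretch_le hf D hτ
  refine ⟨|K m|, fun σ ν u h t ht => ?_⟩
  have hν := h.hν
  refine sobLp_le_of_forall_abs_le (by positivity) fun x _ => ?_
  have hx := (hK σ ν u h t ht m (x / ν)).trans (le_abs_self _)
  rw [iteratedDeriv_comp_mul_left (h.contDiff_slice (hτ.le.trans ht)), mul_div_cancel₀ _ hν.ne',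
    abs_mul, abs_of_pos (pow_pos hν m)] at hx
  rwa [Real.rpow_neg hν.le, Real.rpow_natCast, ← div_eq_mul_inv, le_div_iff₀' (pow_pos hν m)]

theorem exists_sobLp_le_of_one_lt (hf : ContDiff ℝ (⊤ : ℕ∞) f) (D : ℝ) {τ : ℝ} (hτ : 0 < τ)
    {m : ℕ} (hm : 1 ≤ m) {p : ℝ≥0∞} (hp : 1 < p) (hp' : p ≠ ⊤) :
    ∃ C, ∀ σ ν u, IsBurgersSolutionOfSize f σ ν D u → ∀ t ≥ τ,
      sobLp m p (u t) ≤ C * ν ^ (-(m - p.toReal⁻¹)) := by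
  obtain ⟨K, hK⟩ := exists_abs_iteratedDeriv_stretch_le hf D hτ
  have hq : 1 < p.toReal := by
    simpa using (ENNReal.toReal_lt_toReal ENNReal.one_ne_top hp').2 hp
  obtain ⟨j, rfl⟩ := Nat.exists_eq_add_of_le' hm
  obtain ⟨C, hC, hinterp⟩ := exists_abs_iteratedDeriv_succ_le_mul_integral_rpow j
    (inv_pos.2 (zero_lt_one.trans hq)) (inv_lt_one_of_one_lt₀ hq) K
  refine ⟨C * (2 * D) ^ p.toReal⁻¹, fun σ ν u h t ht => ?_⟩
  have ht₀ := hτ.le.trans ht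
  have hν := h.hν
  have hv := h.contDiff_slice ht₀
  have hbounded : DerivBoundedOn K univ fun y => u t (ν * y) :=
    ⟨hv.comp (by fun_prop), fun i y _ => hK σ ν u h t ht i y⟩
  refine (sobLp_le_of_abs_iteratedDeriv_stretch_le hv (h.hper t) (zero_lt_one.trans hp).ne' hp' hν
    hC (hinterp _ hbounded)).trans ?_
  gcongr
  · exact sobLp_nonneg 1 1 (u t)
  · exact h.burgersD_eq ▸ h.sobLp_one_one_le ht₀

theorem exists_sobLp_le_rpow (hf : ContDiff ℝ (⊤ : ℕ∞) f) (D : ℝ) {τ : ℝ} (hτ : 0 < τ) {m : ℕ}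
    {p : ℝ≥0∞} (hmp : (m ≤ 1 ∧ 1 ≤ p) ∨ (2 ≤ m ∧ 1 < p)) :
    ∃ C > 0, ∀ σ ν u, IsBurgersSolutionOfSize f σ ν D u → ∀ t ≥ τ,
      sobLp m p (u t) ≤ C * ν ^ (-scalingExponent m p) := by
  suffices hC : ∃ C, ∀ σ ν u, IsBurgersSolutionOfSize f σ ν D u → ∀ t ≥ τ,
      sobLp m p (u t) ≤ C * ν ^ (-scalingExponent m p) by
    obtain ⟨C, hC⟩ := hC
    refine ⟨|C| + 1, by positivity, fun σ ν u h t ht => (hC σ ν u h t ht).trans ?_⟩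
    gcongr
    · exact Real.rpow_nonneg h.hν.le _
    · exact (le_abs_self C).trans (le_add_of_nonneg_right zero_le_one)
  have hp : 1 ≤ p := hmp.elim And.right fun hmp => hmp.2.le
  rcases Nat.eq_zero_or_pos m with rfl | hm
  · refine ⟨D, fun σ ν u h t ht => ?_⟩
    simpa [scalingExponent_zero, h.burgersD_eq] using h.sobLp_zero_le (hτ.le.trans ht) p
  rw [scalingExponent_of_one_le hm hp]
  rcases eq_or_ne p ⊤ with rfl | hp_top
  · simpa using exists_sobLp_top_le hf D hτ m
  rcases hp.eq_or_lt with rfl | hp_gt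
  · obtain rfl : m = 1 := by
      rcases hmp with hmp | hmp
      · exact le_antisymm hmp.1 hm
      · exact absurd hmp.2 (lt_irrefl 1)
    refine ⟨2 * D, fun σ ν u h t ht => ?_⟩
    simpa [h.burgersD_eq] using h.sobLp_one_one_le (hτ.le.trans ht)
  · exact exists_sobLp_le_of_one_lt hf D hτ hm hp_gt hp_top

end UpperBound

/-! ### The energy balance -/

section EnergyBalance

/-- The energy `|u(t)|₂²`. -/
noncomputable def energy (u : ℝ → ℝ → ℝ) (t : ℝ) : ℝ := ∫ x in (0 : ℝ)..1, u t x ^ 2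

/-- The rate `ν |u_x(t)|₂²` at which half of the energy is dissipated. -/
noncomputable def dissipation (ν : ℝ) (u : ℝ → ℝ → ℝ) (t : ℝ) : ℝ :=
  ν * ∫ x in (0 : ℝ)..1, spaceDeriv 1 u t x ^ 2

theorem energy_nonneg (u : ℝ → ℝ → ℝ) (t : ℝ) : 0 ≤ energy u t :=
  intervalIntegral.integral_nonneg zero_le_one fun _ _ => sq_nonneg _

theorem continuousOn_intervalIntegral_of_continuousOn {W : ℝ → ℝ → ℝ}
    (hW : ContinuousOn (Function.uncurry W) (Ici 0 ×ˢ univ)) (a b : ℝ) :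
    ContinuousOn (fun t => ∫ x in a..b, W t x) (Ici 0) := by
  have hclamp : Continuous (Function.uncurry fun t x => W (max t 0) x) :=
    hW.comp_continuous (f := fun z : ℝ × ℝ => (max z.1 0, z.2)) (by fun_prop)
      fun z => ⟨le_max_right z.1 0, mem_univ _⟩
  refine (intervalIntegral.continuous_parametric_intervalIntegral_of_continuous' (μ := volume)
    hclamp a b).continuousOn.congr fun t ht => ?_
  simp only [max_eq_left (mem_Ici.1 ht)]

theorem SmoothOnPosTime.hasDerivAt_intervalIntegral {W : ℝ → ℝ → ℝ} (hW : SmoothOnPosTime W)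
    {t : ℝ} (ht : 0 < t) (a b : ℝ) :
    HasDerivAt (fun t => ∫ x in a..b, W t x) (∫ x in a..b, timeDeriv W t x) t := by
  have hslice {V : ℝ → ℝ → ℝ} (hV : SmoothOnPosTime V) {s : ℝ} (hs : 0 < s) : Continuous (V s) :=
    (hV.contDiff_slice hs).continuous
  have hpos {s : ℝ} (hs : s ∈ Icc (t / 2) (2 * t)) : 0 < s := (half_pos ht).trans_le hs.1
  obtain ⟨C, hC⟩ := (isCompact_Icc (a := t / 2) (b := 2 * t)).prod isCompact_uIcc
    |>.exists_bound_of_continuousOn (f := Function.uncurry (timeDeriv W)) (s := _ ×ˢ uIcc a b)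
      (hW.timeDeriv.continuousOn.mono fun z hz => ⟨hpos hz.1, mem_univ _⟩)
  have hnhds : Icc (t / 2) (2 * t) ∈ nhds t := Icc_mem_nhds (by linarith) (by linarith)
  refine (intervalIntegral.hasDerivAt_integral_of_dominated_loc_of_deriv_le (bound := fun _ => C)
    hnhds ?_ ((hslice hW ht).intervalIntegrable a b)
    (hslice hW.timeDeriv ht).aestronglyMeasurable (ae_of_all _ fun x hx s hs => ?_)
    intervalIntegrable_const
    (ae_of_all _ fun x _ s hs => hW.hasDerivAt_timeDeriv (hpos hs) x)).2
  · filter_upwards [hnhds] with s hs using (hslice hW (hpos hs)).aestronglyMeasurable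
  · exact hC (s, x) ⟨hs, uIoc_subset_uIcc hx⟩

theorem IsClassicalSolution.integral_mul_timeDeriv_eq {f : ℝ → ℝ} {ν : ℝ} {v : ℝ → ℝ → ℝ}
    (hv : IsClassicalSolution f ν v) (hf : Continuous (deriv f)) {t : ℝ}
    (hper : Function.Periodic (v t) 1) (ht : 0 < t) :
    ∫ x in (0 : ℝ)..1, v t x * timeDeriv v t x = -dissipation ν v t := by
  have hcont (j : ℕ) : Continuous (spaceDeriv j v t) :=
    ((hv.smooth.spaceDeriv j).contDiff_slice ht).continuous
  have hderiv (j : ℕ) (x : ℝ) := hv.smooth.hasDerivAt_spaceDeriv j ht x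
  have hv₀ := hcont 0
  have hperiod (j : ℕ) : spaceDeriv j v t 1 = spaceDeriv j v t 0 := by
    simpa only [spaceDeriv, zero_add] using periodic_iteratedDeriv hper j 0
  have hviscous : ∫ x in (0 : ℝ)..1, v t x * spaceDeriv 2 v t x
      = -∫ x in (0 : ℝ)..1, spaceDeriv 1 v t x ^ 2 := by
    have hparts := intervalIntegral.integral_mul_deriv_eq_deriv_mul (a := 0) (b := 1)
      (fun x _ => hderiv 0 x) (fun x _ => hderiv 1 x) ((hcont 1).intervalIntegrable _ _)
      ((hcont 2).intervalIntegrable _ _)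
    simpa only [hperiod, sub_self, zero_sub, spaceDeriv_zero, zero_add, ← sq] using hparts
  have htransport : ∫ x in (0 : ℝ)..1, v t x * deriv f (v t x) * spaceDeriv 1 v t x = 0 := by
    have hsubst := intervalIntegral.integral_comp_mul_deriv (a := 0) (b := 1)
      (g := fun y => y * deriv f y) (fun x _ => hderiv 0 x) (hcont 1).continuousOn
      (continuous_id.mul hf)
    simpa only [Function.comp_apply, hperiod, intervalIntegral.integral_same, spaceDeriv_zero,
      zero_add] using hsubst
  rw [spaceDeriv_zero] at hv₀
  have hv₂ := hcont 2
  calc ∫ x in (0 : ℝ)..1, v t x * timeDeriv v t x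
      = ∫ x in (0 : ℝ)..1, (ν * (v t x * spaceDeriv 2 v t x)
          - v t x * deriv f (v t x) * spaceDeriv 1 v t x) :=
        intervalIntegral.integral_congr fun x _ => by
          linear_combination v t x * hv.pde t ht x
    _ = -dissipation ν v t := by
        rw [intervalIntegral.integral_sub (Continuous.intervalIntegrable (by fun_prop) _ _)
          (Continuous.intervalIntegrable (by fun_prop) _ _), intervalIntegral.integral_const_mul,
          hviscous, htransport, dissipation]
        ring

end EnergyBalance

namespace IsBurgersSolution

variable {f : ℝ → ℝ} {σ ν : ℝ} {u : ℝ → ℝ → ℝ} {t : ℝ}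

theorem continuousOn_energy (h : IsBurgersSolution f σ ν u) : ContinuousOn (energy u) (Ici 0) :=
  continuousOn_intervalIntegral_of_continuousOn (W := fun t x => u t x ^ 2)
    (h.hu.continuousOn.fun_pow 2) 0 1

theorem continuousOn_dissipation (h : IsBurgersSolution f σ ν u) :
    ContinuousOn (dissipation ν u) (Ici 0) :=
  continuousOn_const.mul <| continuousOn_intervalIntegral_of_continuousOn
    (W := fun t x => spaceDeriv 1 u t x ^ 2) (h.continuousOn_spaceDeriv_one.fun_pow 2) 0 1

theorem energy_eq_sobLp_sq (h : IsBurgersSolution f σ ν u) (ht : 0 ≤ t) :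
    energy u t = sobLp 0 2 (u t) ^ 2 := by
  rw [sobLp_two_sq_eq_integral (h.continuous_iteratedDeriv ht 0), iteratedDeriv_zero, energy]

theorem dissipation_eq_mul_sobLp_sq (h : IsBurgersSolution f σ ν u) (ht : 0 ≤ t) :
    dissipation ν u t = ν * sobLp 1 2 (u t) ^ 2 := by
  rw [sobLp_two_sq_eq_integral (h.continuous_iteratedDeriv ht 1)]
  rfl

theorem hasDerivAt_energy (h : IsBurgersSolution f σ ν u) (ht : 0 < t) :
    HasDerivAt (energy u) (-2 * dissipation ν u t) t := by
  have hv := h.isClassicalSolution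
  have hsq : SmoothOnPosTime fun t x => u t x ^ 2 := ContDiffOn.pow hv.smooth 2
  have htime (x : ℝ) : timeDeriv (fun t x => u t x ^ 2) t x = 2 * (u t x * timeDeriv u t x) :=
    ((hv.smooth.hasDerivAt_timeDeriv ht x).fun_pow 2).deriv.trans (by ring)
  have henergy := hsq.hasDerivAt_intervalIntegral ht 0 1
  simp only [htime, intervalIntegral.integral_const_mul,
    hv.integral_mul_timeDeriv_eq (h.hf.continuous_deriv (by simp)) (h.hper t) ht] at henergy
  exact henergy.congr_deriv (by ring)

theorem energy_sub_energy_eq (h : IsBurgersSolution f σ ν u) {a b : ℝ} (ha : 0 ≤ a)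
    (hab : a ≤ b) : energy u a - energy u b = 2 * ∫ t in a..b, dissipation ν u t := by
  have hsub : Icc a b ⊆ Ici 0 := fun x hx => ha.trans hx.1
  have hdiss : ContinuousOn (fun t => -2 * dissipation ν u t) (Icc a b) :=
    (h.continuousOn_dissipation.mono hsub).const_mul _
  have hftc := intervalIntegral.integral_eq_sub_of_hasDerivAt_of_le hab
    (h.continuousOn_energy.mono hsub) (fun t ht => h.hasDerivAt_energy (ha.trans_lt ht.1))
    (hdiss.intervalIntegrable_of_Icc hab)
  rw [intervalIntegral.integral_const_mul] at hftc
  linarith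

theorem inv_burgersD_sq_le_energy_zero (h : IsBurgersSolution f σ ν u) :
    (burgersD u ^ 2)⁻¹ ≤ energy u 0 := by
  have hle := h.inv_burgersD_le_sobLp.trans
    (sobLp_le_sobLp_of_le (q := 2) (h.continuous_iteratedDeriv le_rfl 0) one_le_two)
  rw [h.energy_eq_sobLp_sq le_rfl, ← inv_pow]
  exact pow_le_pow_left₀ (inv_nonneg.2 h.burgersD_pos.le) hle 2

theorem sub_le_energy (h : IsBurgersSolution f σ ν u) {Ct : ℝ}
    (hCt : ∀ t, 0 ≤ t → sobLp 1 2 (u t) ^ 2 ≤ Ct * ν⁻¹) (ht : 0 ≤ t) :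
    (burgersD u ^ 2)⁻¹ - 2 * Ct * t ≤ energy u t := by
  have hdiss : ∫ s in (0 : ℝ)..t, dissipation ν u s ≤ ∫ _ in (0 : ℝ)..t, Ct := by
    refine intervalIntegral.integral_mono_on ht ((h.continuousOn_dissipation.mono
      Icc_subset_Ici_self).intervalIntegrable_of_Icc ht) intervalIntegrable_const fun s hs => ?_
    rw [h.dissipation_eq_mul_sobLp_sq hs.1, ← le_div_iff₀' h.hν, div_eq_mul_inv]
    exact hCt s hs.1
  rw [intervalIntegral.integral_const, smul_eq_mul, sub_zero] at hdiss
  linarith [h.energy_sub_energy_eq le_rfl ht, h.inv_burgersD_sq_le_energy_zero]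

theorem energy_le (h : IsBurgersSolution f σ ν u) (ht : 0 < t) :
    energy u t ≤ (1 / (σ * t)) ^ 2 := by
  have hσt : 0 < σ * t := mul_pos h.hσ ht
  have habs (x : ℝ) : |u t x| ≤ 1 / (σ * t) :=
    h.abs_le_of_spaceDeriv_one_le ht.le
      (fun x => (le_div_iff₀' hσt).2 (h.mul_spaceDeriv_one_le_one ht.le x)) x
  rw [h.energy_eq_sobLp_sq ht.le]
  exact pow_le_pow_left₀ (sobLp_nonneg _ _ _) (sobLp_le_of_forall_abs_le (by positivity)
    fun x _ => by simpa only [iteratedDeriv_zero] using habs x) 2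

end IsBurgersSolution

section AveragingWindow

theorem burgersT₁_pos {D Ct : ℝ} (hD : 0 < D) (hCt : 0 < Ct) : 0 < burgersT₁ D Ct := by
  unfold burgersT₁
  positivity

theorem mul_burgersT₁ (D : ℝ) {Ct : ℝ} (hCt : Ct ≠ 0) : Ct * burgersT₁ D Ct = (D ^ 2)⁻¹ / 4 := by
  unfold burgersT₁
  field_simp

theorem burgersT₁_lt_burgersT₂ (σ : ℝ) {D Ct : ℝ} (hD : 0 < D) (hCt : 0 < Ct) :
    burgersT₁ D Ct < burgersT₂ σ D Ct :=
  (by linarith [burgersT₁_pos hD hCt] : burgersT₁ D Ct < 3 / 2 * burgersT₁ D Ct).trans_le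
    (le_max_left _ _)

theorem two_mul_le_mul_burgersT₂ {σ : ℝ} (hσ : 0 < σ) (D Ct : ℝ) :
    2 * D ≤ σ * burgersT₂ σ D Ct := by
  rw [← div_le_iff₀' hσ, div_eq_mul_inv]
  exact le_max_right _ _

namespace IsBurgersSolution

variable {f : ℝ → ℝ} {σ ν Ct : ℝ} {u : ℝ → ℝ → ℝ}

theorem inv_burgersD_sq_div_four_le_energy (h : IsBurgersSolution f σ ν u) (hCt₀ : 0 < Ct)
    (hCt : ∀ t, 0 ≤ t → sobLp 1 2 (u t) ^ 2 ≤ Ct * ν⁻¹) {t : ℝ} (ht : 0 ≤ t)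
    (ht' : t ≤ 3 / 2 * burgersT₁ (burgersD u) Ct) : (burgersD u ^ 2)⁻¹ / 4 ≤ energy u t := by
  linarith [h.sub_le_energy hCt ht, mul_burgersT₁ (burgersD u) hCt₀.ne',
    mul_le_mul_of_nonneg_left ht' hCt₀.le]

/- The energy is at least `D⁻² / 2` at `T₁` and at most `D⁻² / 4` at `T₂`. -/
theorem le_integral_dissipation (h : IsBurgersSolution f σ ν u) (hCt₀ : 0 < Ct)
    (hCt : ∀ t, 0 ≤ t → sobLp 1 2 (u t) ^ 2 ≤ Ct * ν⁻¹) :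
    (burgersD u ^ 2)⁻¹ / 8
      ≤ ∫ t in (burgersT₁ (burgersD u) Ct)..(burgersT₂ σ (burgersD u) Ct), dissipation ν u t := by
  have hD := h.burgersD_pos
  have hT₁ := burgersT₁_pos hD hCt₀
  have hT₁₂ := (burgersT₁_lt_burgersT₂ σ hD hCt₀).le
  have hT₂ := hT₁.trans_le hT₁₂
  have henergy : energy u (burgersT₂ σ (burgersD u) Ct) ≤ (burgersD u ^ 2)⁻¹ / 4 :=
    calc energy u (burgersT₂ σ (burgersD u) Ct)
        ≤ (1 / (σ * burgersT₂ σ (burgersD u) Ct)) ^ 2 := h.energy_le hT₂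
      _ ≤ (1 / (2 * burgersD u)) ^ 2 := by
        refine pow_le_pow_left₀ (one_div_nonneg.2 (mul_pos h.hσ hT₂).le) ?_ 2
        exact one_div_le_one_div_of_le (by positivity) (two_mul_le_mul_burgersT₂ h.hσ _ _)
      _ = (burgersD u ^ 2)⁻¹ / 4 := by
        field_simp
        norm_num
  linarith [h.energy_sub_energy_eq hT₁.le hT₁₂, h.sub_le_energy hCt hT₁.le,
    mul_burgersT₁ (burgersD u) hCt₀.ne']

end IsBurgersSolution

end AveragingWindow

/-! ### Time averages -/

section TimeAverage

variable {a b α : ℝ} {A : ℝ → ℝ}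

theorem timeAvg_rpow_le (hab : a < b) (hα : 0 < α) {C : ℝ} (hA : ∀ t ∈ Icc a b, 0 ≤ A t)
    (hcont : ContinuousOn A (Icc a b)) (hC : ∀ t ∈ Icc a b, A t ≤ C) :
    timeAvg a b (fun t => A t ^ α) ^ (1 / α) ≤ C := by
  have hba : 0 < b - a := sub_pos.2 hab
  have ha : a ∈ Icc a b := left_mem_Icc.2 hab.le
  have hint : ∫ t in a..b, A t ^ α ≤ ∫ _ in a..b, C ^ α :=
    intervalIntegral.integral_mono_on hab.le
      ((hcont.rpow_const fun _ _ => Or.inr hα.le).intervalIntegrable_of_Icc hab.le)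
      intervalIntegrable_const fun t ht => Real.rpow_le_rpow (hA t ht) (hC t ht) hα.le
  have hnonneg : 0 ≤ ∫ t in a..b, A t ^ α :=
    intervalIntegral.integral_nonneg hab.le fun t ht => Real.rpow_nonneg (hA t ht) _
  rw [intervalIntegral.integral_const, smul_eq_mul, ← inv_mul_le_iff₀ hba] at hint
  rw [timeAvg, one_div, Real.rpow_inv_le_iff_of_pos (mul_nonneg (inv_nonneg.2 hba.le) hnonneg)
    ((hA a ha).trans (hC a ha)) hα]
  exact hint

theorem timeAvg_const_mul_rpow (hab : a ≤ b) (hα : α ≠ 0) {s : ℝ} (hs : 0 ≤ s)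
    (hA : ∀ t, 0 ≤ A t) :
    timeAvg a b (fun t => (s * A t) ^ α) ^ (1 / α)
      = s * timeAvg a b (fun t => A t ^ α) ^ (1 / α) := by
  have hnonneg : 0 ≤ timeAvg a b (fun t => A t ^ α) :=
    mul_nonneg (inv_nonneg.2 (sub_nonneg.2 hab))
      (intervalIntegral.integral_nonneg hab fun t _ => Real.rpow_nonneg (hA t) _)
  have havg : timeAvg a b (fun t => (s * A t) ^ α) = s ^ α * timeAvg a b (fun t => A t ^ α) := by
    simp only [timeAvg, Real.mul_rpow hs (hA _), intervalIntegral.integral_const_mul]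
    ring
  rw [havg, Real.mul_rpow (Real.rpow_nonneg hs α) hnonneg, one_div, Real.rpow_rpow_inv hs hα]

/- On the set where `q` exceeds half of its least possible mean, `A` is bounded below; that set
carries half of `∫ q`, and `q ≤ K` there. -/
theorem exists_le_timeAvg_rpow {K K' c κ : ℝ} (hab : a < b) (hα : 0 < α) (hK : 0 < K)
    (hK' : 0 < K') (hc : 0 < c) (hκ : 0 < κ) :
    ∃ δ > 0, ∀ A q : ℝ → ℝ, (∀ t ∈ Icc a b, 0 ≤ A t) → ContinuousOn A (Icc a b) →
      ContinuousOn q (Icc a b) → (∀ t ∈ Icc a b, q t ≤ K) →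
      (∀ t ∈ Icc a b, q t ≤ K' * A t ^ κ) → c ≤ ∫ t in a..b, q t →
      δ ≤ timeAvg a b (fun t => A t ^ α) ^ (1 / α) := by
  have hba : 0 < b - a := sub_pos.2 hab
  set r := c / (2 * (b - a)) with hr
  set δ := (r / K') ^ (1 / κ) with hδ
  have hr₀ : 0 < r := by positivity
  have hδ₀ : 0 < δ := by positivity
  refine ⟨((b - a)⁻¹ * (δ ^ α / K * (c / 2))) ^ (1 / α), by positivity,
    fun A q hA hAcont hqcont hqK hqA hq => ?_⟩
  have hA_ge (t : ℝ) (ht : t ∈ Icc a b) (hrt : r ≤ q t) : δ ≤ A t := by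
    rw [hδ, one_div, Real.rpow_inv_le_iff_of_pos (by positivity) (hA t ht) hκ,
      div_le_iff₀' hK']
    exact hrt.trans (hqA t ht)
  have hpointwise (t : ℝ) (ht : t ∈ Icc a b) : δ ^ α / K * (q t - r) ≤ A t ^ α := by
    rcases le_total (q t) r with hqr | hrq
    · exact (mul_nonpos_of_nonneg_of_nonpos (by positivity) (sub_nonpos.2 hqr)).trans
        (Real.rpow_nonneg (hA t ht) _)
    · calc δ ^ α / K * (q t - r) ≤ δ ^ α / K * K := by
            gcongr
            linarith [hqK t ht]
        _ = δ ^ α := div_mul_cancel₀ _ hK.ne'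
        _ ≤ A t ^ α := Real.rpow_le_rpow hδ₀.le (hA_ge t ht hrq) hα.le
  have hqint := hqcont.intervalIntegrable_of_Icc (μ := volume) hab.le
  have hmono := intervalIntegral.integral_mono_on hab.le
    ((hqint.sub intervalIntegrable_const).const_mul (δ ^ α / K))
    ((hAcont.rpow_const fun _ _ => Or.inr hα.le).intervalIntegrable_of_Icc hab.le) hpointwise
  rw [intervalIntegral.integral_const_mul, intervalIntegral.integral_sub hqint
    intervalIntegrable_const, intervalIntegral.integral_const, smul_eq_mul] at hmono
  have hhalf : (b - a) * r = c / 2 := by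
    rw [hr]
    field_simp
  unfold timeAvg
  gcongr
  refine le_trans ?_ hmono
  gcongr
  linarith

end TimeAverage

section SobolevContinuity

variable {u : ℝ → ℝ → ℝ} {t₀ : ℝ}

theorem SmoothOnPosTime.eventually_abs_spaceDeriv_sub_le (hu : SmoothOnPosTime u) (m : ℕ)
    (ht₀ : 0 < t₀) {ε : ℝ} (hε : 0 < ε) :
    ∀ᶠ t in nhds t₀, ∀ x ∈ Icc (0 : ℝ) 1, |spaceDeriv m u t x - spaceDeriv m u t₀ x| ≤ ε := by
  have hnhds : Icc (t₀ / 2) (2 * t₀) ∈ nhds t₀ := Icc_mem_nhds (by linarith) (by linarith)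
  have hunif := (isCompact_Icc.prod isCompact_Icc).uniformContinuousOn_of_continuous
    (s := Icc (t₀ / 2) (2 * t₀) ×ˢ Icc (0 : ℝ) 1)
    ((hu.spaceDeriv m).continuousOn.mono fun z hz => ⟨(half_pos ht₀).trans_le hz.1.1, mem_univ _⟩)
  obtain ⟨δ, hδ, hdist⟩ := Metric.uniformContinuousOn_iff_le.1 hunif ε hε
  filter_upwards [hnhds, Metric.closedBall_mem_nhds t₀ hδ] with t ht htδ x hx
  refine hdist (t, x) ⟨ht, hx⟩ (t₀, x) ⟨mem_of_mem_nhds hnhds, hx⟩ ?_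
  rw [Prod.dist_eq, dist_self]
  exact max_le htδ hδ.le

theorem SmoothOnPosTime.continuousOn_sobLp (hu : SmoothOnPosTime u) (m : ℕ) {p : ℝ≥0∞}
    (hp : 1 ≤ p) : ContinuousOn (fun t => sobLp m p (u t)) (Ioi 0) := by
  intro t₀ ht₀
  have hcont {t : ℝ} (ht : 0 < t) : Continuous (iteratedDeriv m (u t)) :=
    ((hu.spaceDeriv m).contDiff_slice ht).continuous
  refine (Metric.continuousAt_iff'.2 fun ε hε => ?_).continuousWithinAt
  filter_upwards [hu.eventually_abs_spaceDeriv_sub_le m ht₀ (half_pos hε), Ioi_mem_nhds ht₀]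
    with t ht htpos
  have hle := sobLp_le_sobLp_add (hcont htpos) (hcont ht₀) hp (half_pos hε).le
    fun x hx => ht x (Ioc_subset_Icc_self hx)
  have hge := sobLp_le_sobLp_add (hcont ht₀) (hcont htpos) hp (half_pos hε).le
    fun x hx => (abs_sub_comm _ _).trans_le (ht x (Ioc_subset_Icc_self hx))
  rw [Real.dist_eq, abs_lt]
  constructor <;> linarith

end SobolevContinuity

theorem exists_timeAvg_le_mul_rpow {f : ℝ → ℝ} (hf : ContDiff ℝ (⊤ : ℕ∞) f) (σ : ℝ) {D Ct : ℝ}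
    (hD : 0 < D) (hCt₀ : 0 < Ct) {m : ℕ} {p : ℝ≥0∞}
    (hmp : (m ≤ 1 ∧ 1 ≤ p) ∨ (2 ≤ m ∧ 1 < p)) {α : ℝ} (hα : 0 < α) :
    ∃ C > 0, ∀ ν u, IsBurgersSolutionOfSize f σ ν D u →
      timeAvg (burgersT₁ D Ct) (burgersT₂ σ D Ct) (fun t => sobLp m p (u t) ^ α) ^ (1 / α)
        ≤ C * ν ^ (-scalingExponent m p) := by
  have hT₁ := burgersT₁_pos hD hCt₀
  obtain ⟨C, hC, hle⟩ := exists_sobLp_le_rpow hf D hT₁ hmp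
  refine ⟨C, hC, fun ν u h => timeAvg_rpow_le (burgersT₁_lt_burgersT₂ σ hD hCt₀) hα
    (fun t _ => sobLp_nonneg _ _ _) ?_ fun t ht => hle σ ν u h t ht.1⟩
  exact (h.isClassicalSolution.smooth.continuousOn_sobLp m
    (hmp.elim And.right fun hmp => hmp.2.le)).mono fun t ht => hT₁.trans_le ht.1

/-! ### Lower bounds -/

section Landau

theorem sq_abs_deriv_le_of_abs_le_of_abs_deriv_deriv_le {g : ℝ → ℝ} (hg : Differentiable ℝ g)
    (hg' : Differentiable ℝ (deriv g)) {k a : ℝ} (hk : ∀ y, |g y| ≤ k)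
    (ha : ∀ y, |deriv (deriv g) y| ≤ a) (y : ℝ) : |deriv g y| ^ 2 ≤ 8 * k * a := by
  have hk₀ : 0 ≤ k := (abs_nonneg _).trans (hk y)
  have ha₀ : 0 ≤ a := (abs_nonneg _).trans (ha y)
  have hquadratic (h : ℝ) : 0 ≤ a * (h * h) + -|deriv g y| * h + 2 * k := by
    rcases le_or_gt h 0 with hh | hh
    · linarith [mul_nonneg ha₀ (mul_self_nonneg h),
        mul_nonneg_of_nonpos_of_nonpos (neg_nonpos.2 (abs_nonneg (deriv g y))) hh]
    · have hle := abs_deriv_le_of_abs_le_of_abs_deriv_deriv_le hg hg' (lt_add_of_pos_right y hh)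
        (fun z _ => hk z) (fun z _ => ha z) (left_mem_Icc.2 (le_add_of_nonneg_right hh.le))
      rw [add_sub_cancel_left, div_add' _ _ _ hh.ne', le_div_iff₀ hh] at hle
      linarith
  have hdiscrim := discrim_le_zero hquadratic
  rw [discrim, neg_sq] at hdiscrim
  linarith

theorem exists_abs_deriv_le_mul_rpow (K : ℕ → ℝ) (n : ℕ) :
    ∃ C, 0 ≤ C ∧ ∀ g : ℝ → ℝ, DerivBoundedOn K univ g → ∀ a,
      (∀ y, |iteratedDeriv (n + 1) g y| ≤ a) → ∀ y, |deriv g y| ≤ C * a ^ ((1 / 2 : ℝ) ^ n) := by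
  induction n with
  | zero =>
    refine ⟨1, zero_le_one, fun g _ a ha y => ?_⟩
    simpa only [zero_add, iteratedDeriv_one, pow_zero, Real.rpow_one, one_mul] using ha y
  | succ n ih =>
    obtain ⟨C, hC, hind⟩ := ih
    refine ⟨C * (8 * |K n|) ^ ((1 / 2 : ℝ) ^ (n + 1)), by positivity, fun g hg a ha y => ?_⟩
    have ha₀ : 0 ≤ a := (abs_nonneg _).trans (ha y)
    have hdiff (j : ℕ) : Differentiable ℝ (iteratedDeriv j g) :=
      hg.contDiff.differentiable_iteratedDeriv j (mod_cast WithTop.coe_lt_top j)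
    have hsqrt (z : ℝ) : |iteratedDeriv (n + 1) g z| ≤ (8 * |K n| * a) ^ (1 / 2 : ℝ) := by
      rw [← Real.sqrt_eq_rpow, iteratedDeriv_succ]
      refine Real.le_sqrt_of_sq_le (sq_abs_deriv_le_of_abs_le_of_abs_deriv_deriv_le (hdiff n) ?_
        (fun w => (hg.abs_le n w (mem_univ w)).trans (le_abs_self _)) (fun w => ?_) z)
      · exact iteratedDeriv_succ (f := g) ▸ hdiff (n + 1)
      · simpa only [iteratedDeriv_succ] using ha w
    refine (hind g hg _ hsqrt y).trans_eq ?_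
    rw [← Real.rpow_mul (by positivity), ← pow_succ', Real.mul_rpow (by positivity) ha₀,
      mul_assoc]

/- A function with slope at most `B` exceeds `|g y| / 2` up to distance `|g y| / (2 * B)`. -/
theorem rpow_add_one_le_mul_integral_rpow {g : ℝ → ℝ} (hg : Differentiable ℝ g) {B q : ℝ}
    (hB : 0 < B) (hq : 0 ≤ q) (hgB : ∀ y, |g y| ≤ B) (hgB' : ∀ y, |deriv g y| ≤ B) (y : ℝ) :
    |g y| ^ (q + 1) ≤ 2 ^ (q + 1) * B * ∫ s in y..(y + 1), |g s| ^ q := by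
  set a := |g y|
  have ha₀ : 0 ≤ a := abs_nonneg _
  set h := a / (2 * B) with hh
  have hh₀ : 0 ≤ h := by positivity
  have hh₁ : h ≤ 1 := by
    rw [hh, div_le_one (by positivity)]
    linarith [hgB y]
  have hcont : Continuous fun s => |g s| ^ q := hg.continuous.abs.rpow_const fun _ => Or.inr hq
  have hhalf (s : ℝ) (hs : s ∈ Icc y (y + h)) : a / 2 ≤ |g s| := by
    have hvar : |g y - g s| ≤ B * |y - s| :=
      Convex.norm_image_sub_le_of_norm_deriv_le (fun z _ => hg z) (fun z _ => hgB' z) convex_univ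
        (mem_univ s) (mem_univ y)
    have hdist : |y - s| ≤ h := by
      rw [abs_le]
      constructor <;> linarith [hs.1, hs.2]
    have hBh : B * h = a / 2 := by
      rw [hh]
      field_simp
    linarith [abs_sub_abs_le_abs_sub (g y) (g s), mul_le_mul_of_nonneg_left hdist hB.le]
  have hshort : h * (a / 2) ^ q ≤ ∫ s in y..(y + h), |g s| ^ q := by
    have hmono := intervalIntegral.integral_mono_on (μ := volume) (le_add_of_nonneg_right hh₀)
      intervalIntegrable_const (hcont.intervalIntegrable y (y + h))
      fun s hs => Real.rpow_le_rpow (by positivity) (hhalf s hs) hq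
    rwa [intervalIntegral.integral_const, add_sub_cancel_left, smul_eq_mul] at hmono
  have hlong : ∫ s in y..(y + h), |g s| ^ q ≤ ∫ s in y..(y + 1), |g s| ^ q :=
    intervalIntegral.integral_mono_interval le_rfl (by linarith) (by linarith)
      (ae_of_all _ fun s => Real.rpow_nonneg (abs_nonneg _) _) (hcont.intervalIntegrable _ _)
  calc a ^ (q + 1) = 2 ^ (q + 1) * B * (h * (a / 2) ^ q) := by
        rw [Real.rpow_add_one' ha₀ (by positivity), Real.rpow_add_one two_ne_zero,
          Real.div_rpow ha₀ zero_le_two, hh]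
        field_simp
    _ ≤ 2 ^ (q + 1) * B * ∫ s in y..(y + 1), |g s| ^ q := by
        gcongr
        exact hshort.trans hlong

end Landau

section Stretch

theorem integral_comp_mul_le_of_periodic {F : ℝ → ℝ} (hF : Continuous F) (hF₀ : ∀ x, 0 ≤ F x)
    (hper : Function.Periodic F 1) {ν : ℝ} (hν : 0 < ν) (hν₁ : ν ≤ 1) (y : ℝ) :
    ∫ s in y..(y + 1), F (ν * s) ≤ ν⁻¹ * ∫ x in (0 : ℝ)..1, F x := by
  have hsubst := intervalIntegral.mul_integral_comp_mul_left (a := y) (b := y + 1) (f := F) (c := ν)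
  have hperiod := hper.intervalIntegral_add_eq (ν * y) 0
  rw [zero_add] at hperiod
  rw [le_inv_mul_iff₀ hν, hsubst, ← hperiod]
  exact intervalIntegral.integral_mono_interval le_rfl (by linarith) (by linarith)
    (ae_of_all _ hF₀) (hF.intervalIntegrable _ _)

theorem integral_rpow_abs_iteratedDeriv_stretch_le {m : ℕ} {v : ℝ → ℝ}
    (hv : ContDiff ℝ (⊤ : ℕ∞) v) (hper : Function.Periodic v 1) {p : ℝ≥0∞} (hp₀ : p ≠ 0)
    (hp : p ≠ ⊤) {ν : ℝ} (hν : 0 < ν) (hν₁ : ν ≤ 1) (y : ℝ) :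
    ∫ s in y..(y + 1), |iteratedDeriv m (fun y => v (ν * y)) s| ^ p.toReal
      ≤ (ν ^ (m - p.toReal⁻¹) * sobLp m p v) ^ p.toReal := by
  have hq : 0 < p.toReal := ENNReal.toReal_pos hp₀ hp
  have hvm : Continuous (iteratedDeriv m v) := hv.continuous_iteratedDeriv m (mod_cast le_top)
  set I := ∫ x in (0 : ℝ)..1, |iteratedDeriv m v x| ^ p.toReal with hI
  have hI₀ : 0 ≤ I := intervalIntegral.integral_nonneg zero_le_one fun _ _ => by positivity
  calc ∫ s in y..(y + 1), |iteratedDeriv m (fun y => v (ν * y)) s| ^ p.toReal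
      = (ν ^ m) ^ p.toReal * ∫ s in y..(y + 1), |iteratedDeriv m v (ν * s)| ^ p.toReal := by
        simp only [iteratedDeriv_comp_mul_left hv, abs_mul, abs_of_pos (pow_pos hν m),
          Real.mul_rpow (pow_nonneg hν.le m) (abs_nonneg _),
          intervalIntegral.integral_const_mul]
    _ ≤ (ν ^ m) ^ p.toReal * (ν⁻¹ * I) := by
        gcongr
        refine integral_comp_mul_le_of_periodic (hvm.abs.rpow_const fun _ => Or.inr hq.le)
          (fun _ => by positivity) (fun x => ?_) hν hν₁ y
        simp only [periodic_iteratedDeriv hper m x]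
    _ = (ν ^ (m - p.toReal⁻¹) * sobLp m p v) ^ p.toReal := by
        rw [sobLp_eq_integral_rpow hvm hp₀ hp, ← hI, Real.mul_rpow (by positivity) (by positivity),
          Real.rpow_inv_rpow hI₀ hq.ne', Real.rpow_sub hν, Real.rpow_natCast,
          Real.div_rpow (by positivity) (by positivity), Real.rpow_inv_rpow hν.le hq.ne',
          div_eq_mul_inv, mul_assoc]

theorem abs_iteratedDeriv_stretch_le_sobLp_rpow {m : ℕ} {v : ℝ → ℝ}
    (hv : ContDiff ℝ (⊤ : ℕ∞) v) (hper : Function.Periodic v 1) {p : ℝ≥0∞} (hp₀ : p ≠ 0)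
    (hp : p ≠ ⊤) {ν B : ℝ} (hν : 0 < ν) (hν₁ : ν ≤ 1) (hB : 0 < B)
    (hm : ∀ y, |iteratedDeriv m (fun y => v (ν * y)) y| ≤ B)
    (hm' : ∀ y, |iteratedDeriv (m + 1) (fun y => v (ν * y)) y| ≤ B) (y : ℝ) :
    |iteratedDeriv m (fun y => v (ν * y)) y|
      ≤ (2 ^ (p.toReal + 1) * B) ^ (p.toReal + 1)⁻¹
        * (ν ^ (m - p.toReal⁻¹) * sobLp m p v) ^ (p.toReal / (p.toReal + 1)) := by
  have hq : 0 < p.toReal := ENNReal.toReal_pos hp₀ hp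
  have hstretch : ContDiff ℝ (⊤ : ℕ∞) fun y => v (ν * y) := hv.comp (by fun_prop)
  have hN : 0 ≤ ν ^ (m - p.toReal⁻¹) * sobLp m p v :=
    mul_nonneg (Real.rpow_nonneg hν.le _) (sobLp_nonneg _ _ _)
  have hpow := rpow_add_one_le_mul_integral_rpow
    (hstretch.differentiable_iteratedDeriv m (mod_cast WithTop.coe_lt_top m)) hB hq.le hm
    (fun z => by simpa only [iteratedDeriv_succ] using hm' z) y
  rw [div_eq_mul_inv, Real.rpow_mul hN, ← Real.mul_rpow (by positivity) (by positivity),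
    Real.le_rpow_inv_iff_of_pos (abs_nonneg _) (by positivity) (by positivity)]
  refine hpow.trans ?_
  gcongr
  exact integral_rpow_abs_iteratedDeriv_stretch_le hv hper hp₀ hp hν hν₁ y

end Stretch

section LowerBound

variable {f : ℝ → ℝ} {σ ν Ct : ℝ} {u : ℝ → ℝ → ℝ} {t : ℝ} {p : ℝ≥0∞}

namespace IsBurgersSolution

theorem dissipation_le_of_abs_deriv_stretch_le (h : IsBurgersSolution f σ ν u) (ht : 0 ≤ t)
    {S : ℝ} (hS : ∀ y, |deriv (fun y => u t (ν * y)) y| ≤ S) :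
    dissipation ν u t ≤ 2 * burgersD u * S := by
  have hν := h.hν
  have hS₀ : 0 ≤ S := (abs_nonneg _).trans (hS 0)
  have hcont : Continuous (spaceDeriv 1 u t) := h.continuous_iteratedDeriv ht 1
  have hbound (x : ℝ) : |spaceDeriv 1 u t x| ≤ S / ν := by
    have hx := hS (x / ν)
    rwa [deriv_comp_mul_left, mul_div_cancel₀ x hν.ne', smul_eq_mul, abs_mul, abs_of_pos hν,
      ← le_div_iff₀' hν, ← spaceDeriv_one_eq_deriv] at hx
  calc dissipation ν u t ≤ ν * (S / ν * ∫ x in (0 : ℝ)..1, |spaceDeriv 1 u t x|) :=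
        mul_le_mul_of_nonneg_left (integral_sq_le_mul_integral_abs zero_le_one hcont hbound) hν.le
    _ = S * sobLp 1 1 (u t) := by
        rw [sobLp_one_eq_integral hcont, ← mul_assoc, mul_div_cancel₀ S hν.ne']
        rfl
    _ ≤ S * (2 * burgersD u) := mul_le_mul_of_nonneg_left (h.sobLp_one_one_le ht) hS₀
    _ = 2 * burgersD u * S := mul_comm _ _

theorem energy_le_mul_sobLp (h : IsBurgersSolution f σ ν u) (ht : 0 ≤ t) (hp : 1 ≤ p) :
    energy u t ≤ burgersD u * sobLp 0 p (u t) := by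
  have hcont := h.continuous_iteratedDeriv ht 0
  refine (integral_sq_le_mul_integral_abs zero_le_one (h.contDiff_slice ht).continuous
    (h.abs_le_burgersD ht)).trans (mul_le_mul_of_nonneg_left ?_ h.burgersD_pos.le)
  simpa only [sobLp_one_eq_integral hcont, iteratedDeriv_zero] using
    sobLp_le_sobLp_of_le hcont hp

theorem le_integral_energy (h : IsBurgersSolution f σ ν u) (hCt₀ : 0 < Ct)
    (hCt : ∀ t, 0 ≤ t → sobLp 1 2 (u t) ^ 2 ≤ Ct * ν⁻¹) :
    burgersT₁ (burgersD u) Ct / 2 * ((burgersD u ^ 2)⁻¹ / 4)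
      ≤ ∫ t in (burgersT₁ (burgersD u) Ct)..(burgersT₂ σ (burgersD u) Ct), energy u t := by
  set T₁ := burgersT₁ (burgersD u) Ct
  have hT₁₀ : 0 < T₁ := burgersT₁_pos h.burgersD_pos hCt₀
  have hT₂ : 3 / 2 * T₁ ≤ burgersT₂ σ (burgersD u) Ct := le_max_left _ _
  have hint {b : ℝ} (hb : T₁ ≤ b) : IntervalIntegrable (energy u) volume T₁ b :=
    (h.continuousOn_energy.mono fun t ht => hT₁₀.le.trans ht.1).intervalIntegrable_of_Icc hb
  calc T₁ / 2 * ((burgersD u ^ 2)⁻¹ / 4)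
      = ∫ _ in T₁..(3 / 2 * T₁), (burgersD u ^ 2)⁻¹ / 4 := by
        rw [intervalIntegral.integral_const, smul_eq_mul]
        ring
    _ ≤ ∫ t in T₁..(3 / 2 * T₁), energy u t :=
        intervalIntegral.integral_mono_on (by linarith) intervalIntegrable_const
          (hint (by linarith)) fun t ht =>
            h.inv_burgersD_sq_div_four_le_energy hCt₀ hCt (hT₁₀.le.trans ht.1) ht.2
    _ ≤ ∫ t in T₁..(burgersT₂ σ (burgersD u) Ct), energy u t :=
        intervalIntegral.integral_mono_interval le_rfl (by linarith) hT₂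
          (ae_of_all _ fun t => energy_nonneg u t) (hint (by linarith))

end IsBurgersSolution

theorem exists_abs_iteratedDeriv_stretch_le_sobLp_rpow (hf : ContDiff ℝ (⊤ : ℕ∞) f) (D : ℝ)
    {τ : ℝ} (hτ : 0 < τ) (m : ℕ) (hp : 1 ≤ p) :
    ∃ C κ : ℝ, 0 ≤ C ∧ 0 < κ ∧ ∀ σ ν u, IsBurgersSolutionOfSize f σ ν D u → ∀ t ≥ τ, ∀ y,
      |iteratedDeriv m (fun y => u t (ν * y)) y|
        ≤ C * (ν ^ (m - p.toReal⁻¹) * sobLp m p (u t)) ^ κ := by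
  rcases eq_or_ne p ⊤ with rfl | hp'
  · refine ⟨1, 1, zero_le_one, one_pos, fun σ ν u h t ht y => ?_⟩
    have ht₀ := hτ.le.trans ht
    have hνm : 0 < ν ^ m := pow_pos h.hν m
    rw [iteratedDeriv_comp_mul_left (h.contDiff_slice ht₀), abs_mul, abs_of_pos hνm,
      ENNReal.toReal_top, inv_zero, sub_zero, Real.rpow_natCast, Real.rpow_one, one_mul]
    exact mul_le_mul_of_nonneg_left
      (abs_iteratedDeriv_le_sobLp_top (h.continuous_iteratedDeriv ht₀ m) (h.hper t) _) hνm.le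
  · obtain ⟨K, hK⟩ := exists_abs_iteratedDeriv_stretch_le hf D hτ
    have hp₀ : p ≠ 0 := (zero_lt_one.trans_le hp).ne'
    have hq : 0 < p.toReal := ENNReal.toReal_pos hp₀ hp'
    set B := |K m| + |K (m + 1)| + 1
    refine ⟨(2 ^ (p.toReal + 1) * B) ^ (p.toReal + 1)⁻¹, p.toReal / (p.toReal + 1),
      by positivity, by positivity, fun σ ν u h t ht => ?_⟩
    refine abs_iteratedDeriv_stretch_le_sobLp_rpow (h.contDiff_slice (hτ.le.trans ht)) (h.hper t)
      hp₀ hp' h.hν h.visc_le_one (by positivity) (fun y => ?_) fun y => ?_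
    · linarith [hK σ ν u h t ht m y, le_abs_self (K m), abs_nonneg (K (m + 1))]
    · linarith [hK σ ν u h t ht (m + 1) y, le_abs_self (K (m + 1)), abs_nonneg (K m)]

theorem exists_dissipation_le_rpow (hf : ContDiff ℝ (⊤ : ℕ∞) f) {D : ℝ} (hD : 0 < D) {τ : ℝ}
    (hτ : 0 < τ) {m : ℕ} (hm : 1 ≤ m) (hp : 1 ≤ p) :
    ∃ K > 0, ∃ K' > 0, ∃ κ > (0 : ℝ), ∀ σ ν u, IsBurgersSolutionOfSize f σ ν D u → ∀ t ≥ τ,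
      dissipation ν u t ≤ K ∧
      dissipation ν u t ≤ K' * (ν ^ scalingExponent m p * sobLp m p (u t)) ^ κ := by
  obtain ⟨B, hB⟩ := exists_abs_iteratedDeriv_stretch_le hf D hτ
  obtain ⟨C, κ, hC, hκ, hnorm⟩ := exists_abs_iteratedDeriv_stretch_le_sobLp_rpow hf D hτ m hp
  obtain ⟨n, rfl⟩ := Nat.exists_eq_add_of_le' hm
  obtain ⟨C', hC', hlandau⟩ := exists_abs_deriv_le_mul_rpow B n
  rw [scalingExponent_of_one_le hm hp]
  refine ⟨2 * D * (|B 1| + 1), by positivity, 2 * D * (C' * C ^ ((1 / 2 : ℝ) ^ n) + 1),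
    by positivity, κ * (1 / 2) ^ n, by positivity, fun σ ν u h t ht => ?_⟩
  have ht₀ := hτ.le.trans ht
  set N := ν ^ ((n + 1 : ℕ) - p.toReal⁻¹) * sobLp (n + 1) p (u t)
  have hN₀ : 0 ≤ N := mul_nonneg (Real.rpow_nonneg h.hν.le _) (sobLp_nonneg _ _ _)
  have hbounded : DerivBoundedOn B univ fun y => u t (ν * y) :=
    ⟨(h.contDiff_slice ht₀).comp (by fun_prop), fun j y _ => hB σ ν u h t ht j y⟩
  have hle {S : ℝ} (hS : ∀ y, |deriv (fun y => u t (ν * y)) y| ≤ S) :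
      dissipation ν u t ≤ 2 * D * S :=
    h.burgersD_eq ▸ h.dissipation_le_of_abs_deriv_stretch_le ht₀ hS
  constructor
  · refine hle fun y => ?_
    have hy := hB σ ν u h t ht 1 y
    rw [iteratedDeriv_one] at hy
    linarith [le_abs_self (B 1)]
  · refine (hle (hlandau _ hbounded _ (hnorm σ ν u h t ht))).trans ?_
    rw [Real.mul_rpow hC (by positivity), ← Real.rpow_mul hN₀, ← mul_assoc C', mul_assoc (2 * D)]
    gcongr
    exact le_add_of_nonneg_right zero_le_one

/- The quantity `q` is the energy if `m = 0` and the dissipation otherwise. -/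
theorem exists_le_integral_and_le_mul_rpow (hf : ContDiff ℝ (⊤ : ℕ∞) f) {D : ℝ} (hD : 0 < D)
    (hCt₀ : 0 < Ct) (hCt : ∀ ν u, IsBurgersSolutionOfSize f σ ν D u →
      ∀ t, 0 ≤ t → sobLp 1 2 (u t) ^ 2 ≤ Ct * ν⁻¹) (m : ℕ) (hp : 1 ≤ p) :
    ∃ K > 0, ∃ K' > 0, ∃ c > 0, ∃ κ > (0 : ℝ), ∀ ν u, IsBurgersSolutionOfSize f σ ν D u →
      ∃ q : ℝ → ℝ, ContinuousOn q (Ici 0) ∧ (∀ t ≥ burgersT₁ D Ct, q t ≤ K) ∧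
        (∀ t ≥ burgersT₁ D Ct, q t ≤ K' * (ν ^ scalingExponent m p * sobLp m p (u t)) ^ κ) ∧
        c ≤ ∫ t in (burgersT₁ D Ct)..(burgersT₂ σ D Ct), q t := by
  have hT₁ := burgersT₁_pos hD hCt₀
  rcases Nat.eq_zero_or_pos m with rfl | hm
  · refine ⟨D * D, by positivity, D, hD, burgersT₁ D Ct / 2 * ((D ^ 2)⁻¹ / 4), by positivity, 1,
      one_pos, fun ν u h => ?_⟩
    have hle (t : ℝ) (ht : t ≥ burgersT₁ D Ct) : energy u t ≤ D * sobLp 0 p (u t) :=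
      h.burgersD_eq ▸ h.energy_le_mul_sobLp (hT₁.le.trans ht) hp
    refine ⟨energy u, h.continuousOn_energy, fun t ht => (hle t ht).trans ?_, fun t ht => ?_, ?_⟩
    · exact mul_le_mul_of_nonneg_left
        (h.burgersD_eq ▸ h.sobLp_zero_le (hT₁.le.trans ht) p) hD.le
    · simpa only [scalingExponent_zero, Real.rpow_zero, one_mul, Real.rpow_one] using hle t ht
    · exact h.burgersD_eq ▸ h.le_integral_energy hCt₀ (hCt ν u h)
  · obtain ⟨K, hK, K', hK', κ, hκ, hle⟩ := exists_dissipation_le_rpow hf hD hT₁ hm hp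
    refine ⟨K, hK, K', hK', (D ^ 2)⁻¹ / 8, by positivity, κ, hκ, fun ν u h =>
      ⟨dissipation ν u, h.continuousOn_dissipation, fun t ht => (hle σ ν u h t ht).1,
        fun t ht => (hle σ ν u h t ht).2, ?_⟩⟩
    exact h.burgersD_eq ▸ h.le_integral_dissipation hCt₀ (hCt ν u h)

theorem exists_mul_rpow_le_timeAvg (hf : ContDiff ℝ (⊤ : ℕ∞) f) {D : ℝ} (hD : 0 < D)
    (hCt₀ : 0 < Ct) (hCt : ∀ ν u, IsBurgersSolutionOfSize f σ ν D u →
      ∀ t, 0 ≤ t → sobLp 1 2 (u t) ^ 2 ≤ Ct * ν⁻¹) (m : ℕ) (hp : 1 ≤ p) {α : ℝ} (hα : 0 < α) :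
    ∃ c > 0, ∀ ν u, IsBurgersSolutionOfSize f σ ν D u →
      c * ν ^ (-scalingExponent m p) ≤
        timeAvg (burgersT₁ D Ct) (burgersT₂ σ D Ct) (fun t => sobLp m p (u t) ^ α) ^ (1 / α) := by
  have hT₁ := burgersT₁_pos hD hCt₀
  have hT₁₂ := burgersT₁_lt_burgersT₂ σ hD hCt₀
  obtain ⟨K, hK, K', hK', c, hc, κ, hκ, hq⟩ :=
    exists_le_integral_and_le_mul_rpow hf hD hCt₀ hCt m hp
  obtain ⟨δ, hδ, havg⟩ := exists_le_timeAvg_rpow hT₁₂ hα hK hK' hc hκ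
  refine ⟨δ, hδ, fun ν u h => ?_⟩
  obtain ⟨q, hqcont, hqK, hqnorm, hqint⟩ := hq ν u h
  have hνγ : 0 < ν ^ scalingExponent m p := Real.rpow_pos_of_pos h.hν _
  have hcont : ContinuousOn (fun t => sobLp m p (u t)) (Icc _ (burgersT₂ σ D Ct)) :=
    (h.isClassicalSolution.smooth.continuousOn_sobLp m hp).mono fun t ht => hT₁.trans_le ht.1
  rw [Real.rpow_neg h.hν.le, ← div_eq_mul_inv, div_le_iff₀' hνγ,
    ← timeAvg_const_mul_rpow hT₁₂.le hα.ne' hνγ.le fun t => sobLp_nonneg m p (u t)]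
  exact havg _ q (fun t _ => mul_nonneg hνγ.le (sobLp_nonneg _ _ _)) (hcont.const_mul _)
    (hqcont.mono fun t ht => hT₁.le.trans ht.1) (fun t ht => hqK t ht.1)
    (fun t ht => hqnorm t ht.1) hqint

end LowerBound

/-- For `m ∈ {0,1}`, `p ∈ [1,∞]` or `m ≥ 2`, `p ∈ (1,∞]`, and
`α > 0`, with `γ = max(0, m - 1/p)`, there are `c, C > 0` depending only on
`f`, `D`, `m`, `p`, `α` such that for every `ν ∈ (0,1]`,
`c ν^{-γ} ≤ {|u(t)|_{m,p}^α}^{1/α} ≤ C ν^{-γ}`. -/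
theorem statement12 (f : ℝ → ℝ) (σ D Ct : ℝ) (hCt : 0 < Ct)
    (hCtb : ∀ ν, 0 < ν → ν ≤ 1 →
      ∀ u : ℝ → ℝ → ℝ, IsBurgersSolution f σ ν u → burgersD u = D →
        ∀ t, 0 ≤ t → sobLp 1 2 (u t) ^ 2 ≤ Ct * ν⁻¹)
    (m : ℕ) (p : ℝ≥0∞) (hmp : (m ≤ 1 ∧ 1 ≤ p) ∨ (2 ≤ m ∧ 1 < p))
    (α : ℝ) (hα : 0 < α) :
    ∃ c > 0, ∃ C > 0, ∀ ν, 0 < ν → ν ≤ 1 →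
      ∀ u : ℝ → ℝ → ℝ, IsBurgersSolution f σ ν u → burgersD u = D →
        c * ν ^ (-(max 0 ((m : ℝ) - (1 / p).toReal)))
          ≤ (timeAvg (burgersT₁ D Ct) (burgersT₂ σ D Ct)
              (fun t => sobLp m p (u t) ^ α)) ^ (1 / α) ∧
        (timeAvg (burgersT₁ D Ct) (burgersT₂ σ D Ct)
              (fun t => sobLp m p (u t) ^ α)) ^ (1 / α)
          ≤ C * ν ^ (-(max 0 ((m : ℝ) - (1 / p).toReal))) := by
  by_cases hex : ∃ ν u, IsBurgersSolutionOfSize f σ ν D u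
  · obtain ⟨ν₀, u₀, h₀⟩ := hex
    have hD : 0 < D := h₀.burgersD_eq ▸ h₀.burgersD_pos
    have hsize : ∀ ν u, IsBurgersSolutionOfSize f σ ν D u →
        ∀ t, 0 ≤ t → sobLp 1 2 (u t) ^ 2 ≤ Ct * ν⁻¹ := fun ν u h =>
      hCtb ν h.hν h.visc_le_one u h.toIsBurgersSolution h.burgersD_eq
    obtain ⟨c, hc, hlower⟩ := exists_mul_rpow_le_timeAvg h₀.hf hD hCt hsize m
      (hmp.elim And.right fun hmp => hmp.2.le) hα
    obtain ⟨C, hC, hupper⟩ := exists_timeAvg_le_mul_rpow h₀.hf σ hD hCt hmp hα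
    exact ⟨c, hc, C, hC, fun ν _ hν u h hu => ⟨hlower ν u ⟨h, hν, hu⟩, hupper ν u ⟨h, hν, hu⟩⟩⟩
  · exact ⟨1, one_pos, 1, one_pos, fun ν _ hν u h hu => absurd ⟨ν, u, h, hν, hu⟩ hex⟩
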